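/- arXiv:2010.00663 — 7 statements merged into one kernel-verified Lean document; each statement's English description precedes it below -/
import Mathlib

section
/- Let Γ be an Abelian group and γ ∈ Γ. If Γ is infinite, or if there are x, y ∈ Γ with y ≠ 0 such that for every integer n ∈ ℤ one has 2x + ny ≠ γ, then the A-paths of weight γ do not have the Erdős–Pósa property. -/
/-!
The obstruction is a grid of `4n` columns and `n + 1` rows. Its top row is cut into a left block of
`n` terminals, a middle block of `2n` vertices and a right block of `n` terminals; horizontal edges
of the top row are kept only in the middle block, and `A` is the set of terminals. The vertical edge
at the terminal of column `c` gets label `α c`, the top edges of the middle block get label `y`, and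
all other edges get label `0`. Hence (`APath.weight_eq`) an `A`-path with ends in columns `c, c'` has
weight `α c + α c' + m • y`, where `m ≠ 0` only if the path visits the middle block of the top row.

If `γ ∉ 2x + ⟨y⟩`, take `α = x` on the left and `α = γ - x - y` on the right: a path of weight `γ`
then joins the left block to the right block and visits the middle block. If `Γ` is infinite, take
`y = 0`, `α i = g i` on the left and `α (3n + i) = γ - g i` on the right, for distinct `g i` such
that `g i + g j ≠ γ` whenever `i ≠ j`: a path of weight `γ` then joins columns `i` and `3n + i`.
In both cases any two such paths contain pieces whose ends interleave on the top row, so they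
intersect, by a parity version of the Jordan curve theorem (`crossing`).

On the other hand fewer than `n` vertices miss some row below the top one, and, for some `i < n`,
the four columns `i, n + 2i, n + 2i + 1, 3n + i`. The path which leaves the left terminal `i`, uses
that row and these columns, and the top edge between columns `n + 2i` and `n + 2i + 1`, has weight
`α i + y + α (3n + i) = γ` (`exists_path_avoiding`), so there is no hitting set with fewer than `n`
vertices.
-/

open SimpleGraph

/-- An `A`-path in a graph `G`: a non-trivial path with both endvertices in `A`
and no interior vertex in `A`. -/
structure APath {V : Type} (G : SimpleGraph V) (A : Set V) where
  first : V
  last : V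
  walk : G.Walk first last
  isPath : walk.IsPath
  ne : first ≠ last
  firstMem : first ∈ A
  lastMem : last ∈ A
  interior : ∀ x ∈ walk.support, x ∈ A → x = first ∨ x = last

/-- The weight of a walk under an edge labelling `lab`. -/
def walkWeight {V Γ : Type} [AddCommGroup Γ] (lab : Sym2 V → Γ)
    {G : SimpleGraph V} {u v : V} (p : G.Walk u v) : Γ :=
  (p.edges.map lab).sum

/-- The weight of an `A`-path under an edge labelling `lab`. -/
def APath.weight {V Γ : Type} [AddCommGroup Γ] {G : SimpleGraph V} {A : Set V}
    (lab : Sym2 V → Γ) (P : APath G A) : Γ :=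
  walkWeight lab P.walk

/-- Two `A`-paths are vertex-disjoint. -/
def APath.VDisjoint {V : Type} {G : SimpleGraph V} {A : Set V}
    (P Q : APath G A) : Prop :=
  List.Disjoint P.walk.support Q.walk.support

/-- The (vertex-)Erdős–Pósa property for a class of `A`-paths in `Γ`-labelled
graphs, the class being given by the predicate `Good`. -/
def HasEPP (Γ : Type) [AddCommGroup Γ]
    (Good : ∀ (V : Type) (G : SimpleGraph V) (A : Set V),
      (Sym2 V → Γ) → APath G A → Prop) : Prop :=
  ∃ f : ℕ → ℕ, ∀ (V : Type) [Fintype V] (G : SimpleGraph V)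
      (lab : Sym2 V → Γ) (A : Set V) (k : ℕ),
    (∃ P : Fin k → APath G A, (∀ i, Good V G A lab (P i)) ∧
      ∀ i j : Fin k, i ≠ j → (P i).VDisjoint (P j)) ∨
    (∃ X : Finset V, X.card ≤ f k ∧
      ∀ P : APath G A, Good V G A lab P → ∃ x ∈ X, x ∈ P.walk.support)

/-! ### The labelled grid -/

/-- Vertices of the grid: pairs (column, row), row `0` being the top row. -/
abbrev GridV (n : ℕ) : Type := Fin (4 * n) × Fin (n + 1)

/-- Adjacency in the full grid, in terms of natural number coordinates. -/
def GAdj (u v : ℕ × ℕ) : Prop :=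
  (u.1 = v.1 ∧ (u.2 + 1 = v.2 ∨ v.2 + 1 = u.2)) ∨
    (u.2 = v.2 ∧ (u.1 + 1 = v.1 ∨ v.1 + 1 = u.1))

/-- The natural number coordinates of a vertex. -/
def pos {n : ℕ} (v : GridV n) : ℕ × ℕ := (v.1, v.2)

lemma pos_injective {n : ℕ} : Function.Injective (pos (n := n)) := by
  rintro ⟨a, b⟩ ⟨c, d⟩ h
  simp only [pos, Prod.mk.injEq] at h
  exact Prod.ext (Fin.ext h.1) (Fin.ext h.2)

/-- The grid in which the horizontal edges of the top row are kept only in the middle block. -/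
def gridG (n : ℕ) : SimpleGraph (GridV n) where
  Adj u v := GAdj (pos u) (pos v) ∧ ((pos u).2 = 0 → (pos v).2 = 0 →
    (n ≤ (pos u).1 ∧ (pos u).1 < 3 * n) ∧ (n ≤ (pos v).1 ∧ (pos v).1 < 3 * n))
  symm := by
    constructor
    rintro u v ⟨h, h'⟩
    refine ⟨?_, fun a b => (h' b a).symm⟩
    unfold GAdj at *
    omega
  loopless := by
    constructor
    rintro u ⟨h, -⟩
    unfold GAdj at h
    omega

/-- The terminals: the left and right blocks of the top row. -/
def gridA (n : ℕ) : Set (GridV n) :=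
  {v | (pos v).2 = 0 ∧ ((pos v).1 < n ∨ 3 * n ≤ (pos v).1)}

section Labels

variable {Γ : Type} [AddCommGroup Γ]

/-- The contribution of a vertex to the labels of its non-horizontal edges. -/
def vtxWeight (α : ℕ → Γ) {n : ℕ} (v : GridV n) : Γ :=
  if (pos v).2 = 0 then α (pos v).1 else 0

/-- The edge labelling: `y` on edges inside the top row, and the sum of the contributions of the
two ends on all other edges. -/
def gridLab (α : ℕ → Γ) (y : Γ) (n : ℕ) : Sym2 (GridV n) → Γ :=
  Sym2.lift ⟨fun u v => if (pos u).2 = 0 ∧ (pos v).2 = 0 then y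
    else vtxWeight α u + vtxWeight α v, by
      intro u v
      simp only [and_comm, add_comm]⟩

/-- When `α` vanishes on the middle block, the label of every edge is the sum of the contributions
of its ends, plus `y` if the edge lies in the top row. -/
lemma gridLab_adj {α : ℕ → Γ} {y : Γ} {n : ℕ} (hα : ∀ c, n ≤ c → c < 3 * n → α c = 0)
    {u v : GridV n} (h : (gridG n).Adj u v) :
    ∃ m : ℤ, gridLab α y n s(u, v) = vtxWeight α u + vtxWeight α v + m • y ∧
      (m ≠ 0 → (pos u).2 = 0 ∧ (pos v).2 = 0) := by
  by_cases h0 : (pos u).2 = 0 ∧ (pos v).2 = 0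
  · obtain ⟨⟨h1, h2⟩, h3, h4⟩ := h.2 h0.1 h0.2
    refine ⟨1, ?_, fun _ => h0⟩
    simp [gridLab, vtxWeight, h0, hα _ h1 h2, hα _ h3 h4]
  · exact ⟨0, by simp [gridLab, h0], by simp⟩

/-- Weight of a path all of whose vertices, except possibly its last one, contribute nothing.
The summand `vtxWeight α u` only matters for the trivial path. -/
lemma weight_of_tail {α : ℕ → Γ} {y : Γ} {n : ℕ} (hα : ∀ c, n ≤ c → c < 3 * n → α c = 0)
    {u v : GridV n} (p : (gridG n).Walk u v) (hp : p.IsPath)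
    (hz : ∀ z ∈ p.support, z ≠ v → vtxWeight α z = 0) :
    ∃ m : ℤ, walkWeight (gridLab α y n) p + vtxWeight α u = vtxWeight α v + m • y ∧
      (m ≠ 0 → ∃ z ∈ p.support, ∃ z' ∈ p.support, (gridG n).Adj z z' ∧
        (pos z).2 = 0 ∧ (pos z').2 = 0) := by
  induction p with
  | nil => exact ⟨0, by simp [walkWeight], by simp⟩
  | @cons u w v h p ih =>
    rw [Walk.cons_isPath_iff] at hp
    obtain ⟨m, hm, hm'⟩ := ih hp.1 (fun z hz' => hz z (by simp [hz']))
    obtain ⟨t, ht, ht'⟩ := gridLab_adj (y := y) hα h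
    have hu : vtxWeight α u = 0 := hz u (by simp) (by
      rintro rfl
      exact hp.2 p.end_mem_support)
    refine ⟨m + t, ?_, fun hne => ?_⟩
    · have : walkWeight (gridLab α y n) (Walk.cons h p) =
          gridLab α y n s(u, w) + walkWeight (gridLab α y n) p := by simp [walkWeight]
      rw [this, ht, hu, add_zero, zero_add, add_zsmul, ← add_assoc, ← hm]
      abel
    · by_cases h0 : m = 0
      · have := ht' (by omega)
        exact ⟨u, by simp, w, by simp, h, this⟩
      · obtain ⟨z, hz1, z', hz2, hz3⟩ := hm' h0
        exact ⟨z, by simp [hz1], z', by simp [hz2], hz3⟩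

lemma vtxWeight_of_notMem {α : ℕ → Γ} {n : ℕ} (hα : ∀ c, n ≤ c → c < 3 * n → α c = 0)
    {z : GridV n} (hz : z ∉ gridA n) : vtxWeight α z = 0 := by
  unfold vtxWeight
  split_ifs with h
  · simp only [gridA, Set.mem_ofPred_eq, h, true_and] at hz
    exact hα _ (by omega) (by omega)
  · rfl

/-- The weight of an `A`-path is determined by its ends up to a multiple of `y`, and this multiple
is trivial unless the path visits the middle block of the top row. -/
lemma APath.weight_eq {α : ℕ → Γ} {y : Γ} {n : ℕ} (hα : ∀ c, n ≤ c → c < 3 * n → α c = 0)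
    (P : APath (gridG n) (gridA n)) :
    ∃ m : ℤ, P.weight (gridLab α y n) = α (pos P.first).1 + α (pos P.last).1 + m • y ∧
      (m ≠ 0 → ∃ z ∈ P.walk.support, (pos z).2 = 0 ∧ n ≤ (pos z).1 ∧ (pos z).1 < 3 * n) := by
  obtain ⟨u, v, p, hp, hne, hu, hv, hinner⟩ := P
  simp only [APath.weight]
  have hu' : vtxWeight α u = α (pos u).1 := by simp [vtxWeight, hu.1]
  have hv' : vtxWeight α v = α (pos v).1 := by simp [vtxWeight, hv.1]
  cases p with
  | nil => exact absurd rfl hne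
  | @cons _ w _ h p =>
    rw [Walk.cons_isPath_iff] at hp
    obtain ⟨m, hm, hm'⟩ := weight_of_tail (y := y) hα p hp.1 (by
      intro z hz hzv
      apply vtxWeight_of_notMem hα
      intro hzA
      rcases hinner z (by simp [hz]) hzA with rfl | rfl
      · exact hp.2 hz
      · exact hzv rfl)
    obtain ⟨t, ht, ht'⟩ := gridLab_adj (y := y) hα h
    refine ⟨m + t, ?_, fun hne => ?_⟩
    · have : walkWeight (gridLab α y n) (Walk.cons h p) =
          gridLab α y n s(u, w) + walkWeight (gridLab α y n) p := by simp [walkWeight]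
      rw [this, ht, ← hu', ← hv', add_zsmul, add_assoc (vtxWeight α u) (vtxWeight α v),
        ← add_assoc (vtxWeight α v), ← hm]
      abel
    · by_cases h0 : m = 0
      · have := ht' (by omega)
        exact ⟨u, by simp, this.1, (h.2 this.1 this.2).1⟩
      · obtain ⟨z, hz1, z', hz2, hz3, hz4, hz5⟩ := hm' h0
        exact ⟨z, by simp [hz1], hz4, (hz3.2 hz4 hz5).1⟩

end Labels

/-! ### Paths with interleaved ends on the top row intersect -/

/-- Whether the vertical ray going up from `v`, shifted by half a unit to the right, crosses the
edge `s e`. -/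
def rayCross (s e v : ℕ × ℕ) : ZMod 2 :=
  if s.2 = e.2 ∧ s.2 < v.2 ∧ min s.1 e.1 = v.1 then 1 else 0

/-- Whether `a` lies in the strip swept by the shifted ray when `v` moves to its neighbour `v'`. -/
def strip (v v' a : ℕ × ℕ) : ZMod 2 :=
  if v.2 = v'.2 ∧ a.1 = max v.1 v'.1 ∧ a.2 < v.2 then 1 else 0

/-- Whether `v` lies in a column to the left of `a`. -/
def leftOf (a v : ℕ × ℕ) : ZMod 2 := if v.1 < a.1 then 1 else 0

/-- When `v` moves along an edge disjoint from the edge `s e`, the ray crossing of `s e` changes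
exactly if one of `s`, `e` is swept over and the other is not. -/
lemma rayCross_step {s e v v' : ℕ × ℕ} (hse : GAdj s e) (hv : GAdj v v')
    (h1 : s ≠ v) (h2 : s ≠ v') (h3 : e ≠ v) (h4 : e ≠ v') :
    rayCross s e v + rayCross s e v' = strip v v' s + strip v v' e := by
  obtain ⟨a, b⟩ := s
  obtain ⟨c, d⟩ := e
  obtain ⟨i, j⟩ := v
  obtain ⟨k, l⟩ := v'
  simp only [GAdj, ne_eq, Prod.mk.injEq, rayCross, strip] at *
  rcases hse with ⟨rfl, hse⟩ | ⟨rfl, hse⟩ <;> rcases hv with ⟨rfl, hv⟩ | ⟨rfl, hv⟩ <;>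
    rcases hse with rfl | rfl <;> rcases hv with rfl | rfl <;>
    simp only [true_and, false_and, Nat.succ_ne_self, Nat.left_eq_add,
      one_ne_zero, if_false] <;>
    split_ifs <;> first | rfl | (exfalso; omega)

lemma strip_eq_leftOf {v v' a : ℕ × ℕ} (hv : GAdj v v') (ha : a.2 = 0)
    (h1 : a ≠ v) (h2 : a ≠ v') : strip v v' a = leftOf a v + leftOf a v' := by
  obtain ⟨a, b⟩ := a
  obtain ⟨i, j⟩ := v
  obtain ⟨k, l⟩ := v'
  simp only [GAdj, ne_eq, Prod.mk.injEq, leftOf, strip] at *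
  split_ifs <;> first | rfl | (exfalso; omega)

/-- The number of crossings, modulo two, of the shifted upward ray from `v` with a walk. -/
def crossings {n : ℕ} (v : ℕ × ℕ) : {s e : GridV n} → (gridG n).Walk s e → ZMod 2
  | _, _, .nil => 0
  | s, _, .cons (v := w) _ p => rayCross (pos s) (pos w) v + crossings v p

lemma crossings_top {n : ℕ} {v : ℕ × ℕ} (hv : v.2 = 0) {s e : GridV n}
    (p : (gridG n).Walk s e) : crossings v p = 0 := by
  induction p with
  | nil => rfl
  | cons h p ih => simp [crossings, ih, rayCross, hv]

lemma crossings_step {n : ℕ} {v v' s e : GridV n} (hv : (gridG n).Adj v v')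
    (p : (gridG n).Walk s e) (h1 : v ∉ p.support) (h2 : v' ∉ p.support) :
    crossings (pos v) p + crossings (pos v') p =
      strip (pos v) (pos v') (pos s) + strip (pos v) (pos v') (pos e) := by
  induction p with
  | nil => simp [crossings, CharTwo.add_self_eq_zero]
  | @cons s w e h p ih =>
    simp only [Walk.support_cons, List.mem_cons, not_or] at h1 h2
    have hw1 : w ≠ v := by
      rintro rfl
      exact h1.2 p.start_mem_support
    have hw2 : w ≠ v' := by
      rintro rfl
      exact h2.2 p.start_mem_support
    have e1 := ih h1.2 h2.2
    have e2 := rayCross_step h.1 hv.1 (pos_injective.ne (Ne.symm h1.1))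
      (pos_injective.ne (Ne.symm h2.1)) (pos_injective.ne hw1) (pos_injective.ne hw2)
    have e3 := CharTwo.add_self_eq_zero (strip (pos v) (pos v') (pos w))
    simp only [crossings]
    linear_combination e1 + e2 + e3

/-- The parity telling on which side of a walk `p` with ends on the top row a vertex lies is
constant along walks disjoint from `p`. -/
lemma side_const {n : ℕ} {s e u w : GridV n} (p : (gridG n).Walk s e) (q : (gridG n).Walk u w)
    (hs : (pos s).2 = 0) (he : (pos e).2 = 0) (hd : ∀ z ∈ q.support, z ∉ p.support) :
    crossings (pos u) p + leftOf (pos s) (pos u) + leftOf (pos e) (pos u) =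
      crossings (pos w) p + leftOf (pos s) (pos w) + leftOf (pos e) (pos w) := by
  induction q with
  | nil => rfl
  | @cons u x w h q ih =>
    rw [← ih (fun z hz => hd z (by simp [hz]))]
    have hu : u ∉ p.support := hd u (by simp)
    have hx : x ∉ p.support := hd x (by simp)
    have hne : ∀ {a b : GridV n}, a ∈ p.support → b ∉ p.support → pos a ≠ pos b := by
      intro a b ha hb hab
      exact hb (pos_injective hab ▸ ha)
    have e1 := crossings_step h p hu hx
    rw [strip_eq_leftOf h.1 hs (hne p.start_mem_support hu) (hne p.start_mem_support hx),
      strip_eq_leftOf h.1 he (hne p.end_mem_support hu) (hne p.end_mem_support hx)] at e1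
    have e2 := CharTwo.add_self_eq_zero (crossings (pos x) p)
    have e3 := CharTwo.add_self_eq_zero (leftOf (pos s) (pos u))
    have e4 := CharTwo.add_self_eq_zero (leftOf (pos e) (pos u))
    linear_combination e1 - e2 + e3 + e4

lemma exists_subwalk {V : Type} {G : SimpleGraph V} {u v a b : V} (p : G.Walk u v)
    (ha : a ∈ p.support) (hb : b ∈ p.support) :
    ∃ q : G.Walk a b, ∀ z ∈ q.support, z ∈ p.support := by
  classical
  refine ⟨(p.takeUntil a ha).reverse.append (p.takeUntil b hb), fun z hz => ?_⟩
  rw [Walk.mem_support_append_iff, Walk.support_reverse, List.mem_reverse] at hz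
  rcases hz with hz | hz
  · exact p.support_takeUntil_subset_support ha hz
  · exact p.support_takeUntil_subset_support hb hz

/-- Two walks containing pairs of top row vertices that interleave are not disjoint. -/
lemma crossing {n : ℕ} {s e u w a b c d : GridV n} (p : (gridG n).Walk s e)
    (q : (gridG n).Walk u w) (ha : a ∈ p.support) (hc : c ∈ p.support)
    (hb : b ∈ q.support) (hd : d ∈ q.support)
    (ha0 : (pos a).2 = 0) (hb0 : (pos b).2 = 0) (hc0 : (pos c).2 = 0) (hd0 : (pos d).2 = 0)
    (hab : (pos a).1 < (pos b).1) (hbc : (pos b).1 < (pos c).1) (hcd : (pos c).1 < (pos d).1) :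
    ¬ List.Disjoint p.support q.support := by
  intro hdis
  obtain ⟨p', hp'⟩ := exists_subwalk p ha hc
  obtain ⟨q', hq'⟩ := exists_subwalk q hb hd
  have key := side_const p' q' ha0 hc0 (fun z hz hz' => hdis (hp' z hz') (hq' z hz))
  rw [crossings_top hb0, crossings_top hd0] at key
  simp only [leftOf] at key
  rw [if_neg (by omega), if_pos hbc, if_neg (by omega), if_neg (by omega)] at key
  exact absurd key (by decide)

/-! ### No small hitting set -/

lemma exists_vertical {n : ℕ} (c : Fin (4 * n)) (j : ℕ) (hj : j < n + 1) :
    ∃ p : (gridG n).Walk (c, 0) (c, ⟨j, hj⟩), ∀ z ∈ p.support, z.1 = c := by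
  induction j with
  | zero => exact ⟨Walk.nil, by simp⟩
  | succ j ih =>
    obtain ⟨p, hp⟩ := ih (by omega)
    have h : (gridG n).Adj (c, ⟨j, by omega⟩) (c, ⟨j + 1, hj⟩) := by
      simp [gridG, GAdj, pos]
    refine ⟨p.concat h, fun z hz => ?_⟩
    rw [Walk.support_concat, List.mem_append] at hz
    rcases hz with hz | hz
    · exact hp z hz
    · simp only [List.mem_singleton] at hz
      simp [hz]

lemma exists_horizontal {n : ℕ} (c : Fin (4 * n)) (j : Fin (n + 1)) (hj : j.val ≠ 0) (k : ℕ)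
    (hk : c.val + k < 4 * n) :
    ∃ p : (gridG n).Walk (c, j) (⟨c.val + k, hk⟩, j),
      ∀ z ∈ p.support, z.2 = j ∧ c.val ≤ z.1.val ∧ z.1.val ≤ c.val + k := by
  induction k with
  | zero => exact ⟨Walk.nil, by simp⟩
  | succ k ih =>
    obtain ⟨p, hp⟩ := ih (by omega)
    have h : (gridG n).Adj (⟨c.val + k, by omega⟩, j) (⟨c.val + (k + 1), hk⟩, j) := by
      refine ⟨Or.inr ⟨rfl, Or.inl ?_⟩, fun h => absurd h hj⟩
      simp only [pos]
      omega
    refine ⟨p.concat h, fun z hz => ?_⟩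
    rw [Walk.support_concat, List.mem_append] at hz
    rcases hz with hz | hz
    · have := hp z hz
      exact ⟨this.1, this.2.1, by omega⟩
    · simp only [List.mem_singleton] at hz
      simp [hz]

/-- A path between two top row vertices consisting of vertices of their columns and of the part of
row `j` between these columns. -/
lemma exists_bracket {n : ℕ} (c d : Fin (4 * n)) (hcd : c.val ≤ d.val) (j : Fin (n + 1))
    (hj : j.val ≠ 0) :
    ∃ p : (gridG n).Walk (c, 0) (d, 0), p.IsPath ∧ ∀ z ∈ p.support,
      (z.1 = c ∨ z.1 = d ∨ z.2 = j) ∧ c.val ≤ z.1.val ∧ z.1.val ≤ d.val := by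
  classical
  obtain ⟨p, hp⟩ := exists_vertical c j.val j.isLt
  obtain ⟨q, hq⟩ := exists_vertical d j.val j.isLt
  have hd : d.val = c.val + (d.val - c.val) := by omega
  obtain ⟨r, hr⟩ := exists_horizontal c j hj (d.val - c.val) (by omega)
  have hd' : (⟨c.val + (d.val - c.val), by omega⟩ : Fin (4 * n)) = d := Fin.ext hd.symm
  let r' : (gridG n).Walk (c, j) (d, j) := r.copy rfl (by rw [hd'])
  have hr' : ∀ z ∈ r'.support, z.2 = j ∧ c.val ≤ z.1.val ∧ z.1.val ≤ d.val := by
    intro z hz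
    rw [Walk.support_copy] at hz
    have := hr z hz
    exact ⟨this.1, this.2.1, by omega⟩
  refine ⟨((p.append r').append q.reverse).bypass, Walk.bypass_isPath _, fun z hz => ?_⟩
  have hz := Walk.support_bypass_subset_support _ hz
  rw [Walk.mem_support_append_iff, Walk.mem_support_append_iff, Walk.support_reverse,
    List.mem_reverse] at hz
  rcases hz with (hz | hz) | hz
  · have := hp z hz
    exact ⟨Or.inl this, by rw [this], by rw [this]; exact hcd⟩
  · exact ⟨Or.inr (Or.inr (hr' z hz).1), (hr' z hz).2⟩
  · have := hq z hz
    exact ⟨Or.inr (Or.inl this), by rw [this]; exact hcd, by rw [this]⟩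

section Avoiding

variable {Γ : Type} [AddCommGroup Γ]

/-- If a path between non-adjacent vertices meets the top row only in its ends, and its first vertex
contributes nothing, then its weight is the contribution of its last vertex. -/
lemma weight_bracket {α : ℕ → Γ} {y : Γ} {n : ℕ} (hα : ∀ c, n ≤ c → c < 3 * n → α c = 0)
    {u v : GridV n} (p : (gridG n).Walk u v) (hp : p.IsPath)
    (hu : vtxWeight α u = 0) (hnadj : ¬ (gridG n).Adj u v)
    (htop : ∀ z ∈ p.support, (pos z).2 = 0 → z = u ∨ z = v) :
    walkWeight (gridLab α y n) p = vtxWeight α v := by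
  obtain ⟨m, hm, hm'⟩ := weight_of_tail (y := y) hα p hp (by
    intro z hz hzv
    by_cases h0 : (pos z).2 = 0
    · rcases htop z hz h0 with rfl | rfl
      · exact hu
      · exact absurd rfl hzv
    · simp [vtxWeight, h0])
  have hm0 : m = 0 := by
    by_contra hne
    obtain ⟨z, hz, z', hz', hadj, h0, h0'⟩ := hm' hne
    rcases htop z hz h0 with rfl | rfl <;> rcases htop z' hz' h0' with rfl | rfl
    · exact hadj.ne rfl
    · exact hnadj hadj
    · exact hnadj hadj.symm
    · exact hadj.ne rfl
  simpa [hu, hm0] using hm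

/-- Fewer than `n` vertices miss some `A`-path of weight `γ`. -/
lemma exists_path_avoiding {α : ℕ → Γ} {y γ : Γ} {n : ℕ}
    (hα : ∀ c, n ≤ c → c < 3 * n → α c = 0) (hγ : ∀ i < n, α i + α (3 * n + i) + y = γ)
    (X : Finset (GridV n)) (hX : X.card < n) :
    ∃ P : APath (gridG n) (gridA n), P.weight (gridLab α y n) = γ ∧
      ∀ x ∈ X, x ∉ P.walk.support := by
  classical
  obtain ⟨j, hj0, hj⟩ : ∃ j : Fin (n + 1), j.val ≠ 0 ∧ ∀ x ∈ X, x.2 ≠ j := by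
    by_contra! hcon
    have hsub : (Finset.univ : Finset (Fin n)).image Fin.succ ⊆ X.image Prod.snd := by
      intro j hj
      obtain ⟨i, -, rfl⟩ := Finset.mem_image.1 hj
      obtain ⟨x, hx, hx'⟩ := hcon i.succ (by simp)
      exact Finset.mem_image.2 ⟨x, hx, hx'⟩
    have h1 := Finset.card_le_card hsub
    rw [Finset.card_image_of_injective _ (Fin.succ_injective n), Finset.card_univ,
      Fintype.card_fin] at h1
    have h2 : (X.image Prod.snd).card ≤ X.card := Finset.card_image_le
    omega
  -- `F` sends each of the columns `i, n + 2i, n + 2i + 1, 3n + i` to `i`.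
  let F : GridV n → ℕ := fun x =>
    if x.1.val < n then x.1.val else if x.1.val < 3 * n then (x.1.val - n) / 2 else x.1.val - 3 * n
  obtain ⟨i, hin, hi⟩ : ∃ i < n, ∀ x ∈ X, F x ≠ i := by
    by_contra! hcon
    have hsub : Finset.range n ⊆ X.image F := by
      intro i hi
      obtain ⟨x, hx, hx'⟩ := hcon i (Finset.mem_range.1 hi)
      exact Finset.mem_image.2 ⟨x, hx, hx'⟩
    have h1 := Finset.card_le_card hsub
    rw [Finset.card_range] at h1
    have h2 : (X.image F).card ≤ X.card := Finset.card_image_le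
    omega
  let a : Fin (4 * n) := ⟨i, by omega⟩
  let u : Fin (4 * n) := ⟨n + 2 * i, by omega⟩
  let u' : Fin (4 * n) := ⟨n + 2 * i + 1, by omega⟩
  let b : Fin (4 * n) := ⟨3 * n + i, by omega⟩
  have hXcol : ∀ x ∈ X, x.1 ≠ a ∧ x.1 ≠ u ∧ x.1 ≠ u' ∧ x.1 ≠ b := by
    intro x hx
    have := hi x hx
    simp only [F] at this
    simp only [ne_eq, Fin.ext_iff, a, u, u', b]
    split_ifs at this <;> omega
  obtain ⟨p, hp, hps⟩ := exists_bracket a u (by simp only [a, u]; omega) j hj0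
  obtain ⟨q, hq, hqs⟩ := exists_bracket u' b (by simp only [u', b]; omega) j hj0
  have hadj : (gridG n).Adj (u, 0) (u', 0) := by
    simp [gridG, GAdj, pos, u, u']
    omega
  have hsupp : (p.append (Walk.cons hadj q)).support = p.support ++ q.support := by
    simp [Walk.support_append]
  have hj0' : ∀ z : GridV n, (pos z).2 = 0 → z.2 ≠ j := by
    intro z hz h
    rw [← h] at hj0
    exact hj0 hz
  have htop : ∀ (c d : Fin (4 * n)) (z : GridV n), (pos z).2 = 0 →
      (z.1 = c ∨ z.1 = d ∨ z.2 = j) → z = (c, 0) ∨ z = (d, 0) := by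
    rintro c d ⟨z1, z2⟩ h0 h
    have hz2 : z2 = 0 := Fin.ext h0
    rcases h with rfl | rfl | h
    · simp [hz2]
    · simp [hz2]
    · exact absurd h (hj0' _ h0)
  have hwp : walkWeight (gridLab α y n) p = α i := by
    have h1 := weight_bracket (y := y) hα p.reverse hp.reverse
      (by simp only [vtxWeight, pos, u]; simpa using hα _ (by omega) (by omega))
      (by
        intro h
        have := h.2 rfl rfl
        simp only [pos, a] at this
        omega)
      (by
        intro z hz h0
        rw [Walk.support_reverse, List.mem_reverse] at hz
        exact (htop a u z h0 (hps z hz).1).symm)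
    simpa [walkWeight, vtxWeight, pos, a] using h1
  have hwq : walkWeight (gridLab α y n) q = α (3 * n + i) := by
    have h1 := weight_bracket (y := y) hα q hq
      (by simp only [vtxWeight, pos, u']; simpa using hα _ (by omega) (by omega))
      (by
        intro h
        have := h.2 rfl rfl
        simp only [pos, b] at this
        omega)
      (fun z hz h0 => htop u' b z h0 (hqs z hz).1)
    simpa [walkWeight, vtxWeight, pos, b] using h1
  refine ⟨⟨(a, 0), (b, 0), p.append (Walk.cons hadj q), ?_, ?_, ?_, ?_, ?_⟩, ?_, ?_⟩
  · rw [Walk.isPath_def, hsupp]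
    refine List.nodup_append'.2 ⟨hp.support_nodup, hq.support_nodup, fun z hz hz' => ?_⟩
    have h1 := (hps z hz).2.2
    have h2 := (hqs z hz').2.1
    simp only [u, u'] at h1 h2
    omega
  · intro h
    have := congrArg (fun z : GridV n => z.1.val) h
    simp only [a, b] at this
    omega
  · exact ⟨rfl, Or.inl hin⟩
  · exact ⟨rfl, Or.inr (by simp [pos, b])⟩
  · intro z hz hzA
    rw [hsupp, List.mem_append] at hz
    rcases hz with hz | hz
    · rcases htop a u z hzA.1 (hps z hz).1 with h | h
      · exact Or.inl h
      · have := hzA.2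
        simp only [h, pos, u] at this
        omega
    · rcases htop u' b z hzA.1 (hqs z hz).1 with h | h
      · have := hzA.2
        simp only [h, pos, u'] at this
        omega
      · exact Or.inr h
  · have hy : gridLab α y n s((u, 0), (u', 0)) = y := by simp [gridLab, pos]
    have hsplit : walkWeight (gridLab α y n) (p.append (Walk.cons hadj q)) =
        walkWeight (gridLab α y n) p +
          (gridLab α y n s((u, 0), (u', 0)) + walkWeight (gridLab α y n) q) := by
      simp [walkWeight, Walk.edges_append]
    simp only [APath.weight]
    rw [hsplit, hwp, hwq, hy, ← hγ i hin]
    abel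
  · intro x hx hx'
    have h1 := hXcol x hx
    have h2 := hj x hx
    simp only [hsupp, List.mem_append] at hx'
    rcases hx' with h | h
    · have := (hps x h).1
      tauto
    · have := (hqs x h).1
      tauto

/-- The Erdős–Pósa property fails with `k = 2` as soon as, for every `n`, suitable labels exist for
which any two `A`-paths of weight `γ` in the grid intersect. -/
lemma not_hasEPP (γ : Γ)
    (H : ∀ n : ℕ, ∃ (α : ℕ → Γ) (y : Γ), (∀ c, n ≤ c → c < 3 * n → α c = 0) ∧
      (∀ i < n, α i + α (3 * n + i) + y = γ) ∧
      ∀ P Q : APath (gridG n) (gridA n), P.weight (gridLab α y n) = γ →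
        Q.weight (gridLab α y n) = γ → ¬ P.VDisjoint Q) :
    ¬ HasEPP Γ (fun _ _ _ lab P => P.weight lab = γ) := by
  rintro ⟨f, hf⟩
  obtain ⟨α, y, hα, hγ, hPQ⟩ := H (f 2 + 1)
  rcases hf (GridV (f 2 + 1)) (gridG _) (gridLab α y _) (gridA _) 2 with ⟨P, hP, hd⟩ | ⟨X, hX, hhit⟩
  · exact hPQ (P 0) (P 1) (hP 0) (hP 1) (hd 0 1 (by decide))
  · obtain ⟨P, hP, hav⟩ := exists_path_avoiding hα hγ X (by omega)
    obtain ⟨x, hx, hx'⟩ := hhit P hP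
    exact hav x hx hx'

/-! ### The two choices of labels -/

/-- Case of an infinite group: every path of weight `γ` joins columns `i` and `3n + i`. -/
lemma labels_infinite [Infinite Γ] (γ : Γ) (n : ℕ) :
    ∃ (α : ℕ → Γ) (y : Γ), (∀ c, n ≤ c → c < 3 * n → α c = 0) ∧
      (∀ i < n, α i + α (3 * n + i) + y = γ) ∧
      ∀ P Q : APath (gridG n) (gridA n), P.weight (gridLab α y n) = γ →
        Q.weight (gridLab α y n) = γ → ¬ P.VDisjoint Q := by
  classical
  obtain ⟨g, hg⟩ : ∃ g : ℕ → Γ, ∀ i j, i ≠ j → g i ≠ g j ∧ g i + g j ≠ γ := by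
    have : Std.Symm (fun a b : Γ => a ≠ b ∧ a + b ≠ γ) :=
      ⟨fun a b h => ⟨h.1.symm, by rw [add_comm]; exact h.2⟩⟩
    obtain ⟨g, -, hg⟩ := exists_seq_of_forall_finset_exists' (fun _ : Γ => True)
      (fun a b : Γ => a ≠ b ∧ a + b ≠ γ) (by
        intro s _
        obtain ⟨z, hz⟩ := Infinite.exists_notMem_finset (s ∪ s.image (fun a => γ - a))
        simp only [Finset.mem_union, Finset.mem_image, not_or, not_exists, not_and] at hz
        refine ⟨z, trivial, fun x hx => ⟨?_, fun h => hz.2 x hx (by rw [← h]; abel)⟩⟩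
        rintro rfl
        exact hz.1 hx)
    exact ⟨g, fun i j hij => hg hij⟩
  let α : ℕ → Γ := fun c => if c < n then g c else if c < 3 * n then 0 else γ - g (c - 3 * n)
  have hα : ∀ c, n ≤ c → c < 3 * n → α c = 0 := by
    intro c h1 h2
    simp only [α]
    rw [if_neg (by omega), if_pos h2]
  have hl : ∀ c, c < n → α c = g c := fun c hc => by simp only [α, if_pos hc]
  have hr : ∀ c, 3 * n ≤ c → α c = γ - g (c - 3 * n) := by
    intro c h1
    simp only [α]
    rw [if_neg (by omega), if_neg (by omega)]
  have hends : ∀ P : APath (gridG n) (gridA n), P.weight (gridLab α 0 n) = γ →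
      ∃ z ∈ P.walk.support, ∃ z' ∈ P.walk.support, (pos z).2 = 0 ∧ (pos z').2 = 0 ∧
        (pos z).1 < n ∧ (pos z').1 = 3 * n + (pos z).1 := by
    intro P hP
    obtain ⟨m, hm, -⟩ := APath.weight_eq (y := (0 : Γ)) hα P
    rw [hP, smul_zero, add_zero] at hm
    have hne : (pos P.first).1 ≠ (pos P.last).1 := by
      intro h
      exact P.ne (pos_injective (Prod.ext h (P.firstMem.1.trans P.lastMem.1.symm)))
    have hf := P.firstMem
    have hl' := P.lastMem
    -- For `c < n` and `c' ≥ 3n` the sum `α c + α c'` is `γ` only if `c' = 3n + c`.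
    have hmix : ∀ c c' : ℕ, c < n → 3 * n ≤ c' → γ = α c + α c' → c' = 3 * n + c := by
      intro c c' h1 h2 h3
      rw [hl _ h1, hr _ h2] at h3
      by_contra hcc
      refine (hg c (c' - 3 * n) (by omega)).1 ?_
      have : g c - g (c' - 3 * n) = 0 := by
        have h4 : γ + (g c - g (c' - 3 * n)) = γ + 0 := by
          rw [add_zero]
          conv_rhs => rw [h3]
          abel
        exact add_left_cancel h4
      exact sub_eq_zero.1 this
    rcases hf.2 with h1 | h1 <;> rcases hl'.2 with h2 | h2
    · rw [hl _ h1, hl _ h2] at hm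
      exact absurd hm.symm (hg _ _ hne).2
    · exact ⟨_, P.walk.start_mem_support, _, P.walk.end_mem_support, hf.1, hl'.1, h1,
        hmix _ _ h1 h2 hm⟩
    · exact ⟨_, P.walk.end_mem_support, _, P.walk.start_mem_support, hl'.1, hf.1, h2,
        hmix _ _ h2 h1 (by rw [add_comm]; exact hm)⟩
    · rw [hr _ h1, hr _ h2] at hm
      refine absurd ?_ (hg ((pos P.first).1 - 3 * n) ((pos P.last).1 - 3 * n) (by omega)).2
      have h4 := sub_eq_zero.2 hm.symm
      rw [← sub_eq_zero, ← neg_eq_zero, ← h4]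
      abel
  refine ⟨α, 0, hα, ?_, ?_⟩
  · intro i hi
    rw [hl i hi, hr _ (by omega), Nat.add_sub_cancel_left]
    abel
  · intro P Q hP hQ hd
    obtain ⟨a, ha, a', ha', ha0, ha0', han, haa⟩ := hends P hP
    obtain ⟨b, hb, b', hb', hb0, hb0', hbn, hbb⟩ := hends Q hQ
    rcases lt_trichotomy (pos a).1 (pos b).1 with h | h | h
    · exact crossing P.walk Q.walk ha ha' hb hb' ha0 hb0 ha0' hb0' h (by omega) (by omega) hd
    · have : a = b := pos_injective (Prod.ext h (ha0.trans hb0.symm))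
      exact hd ha (this ▸ hb)
    · exact crossing Q.walk P.walk hb hb' ha ha' hb0 ha0 hb0' ha0' h (by omega) (by omega) hd.symm

/-- Case `γ ∉ 2x + ⟨y⟩`: every path of weight `γ` joins the left block to the right block and
visits the middle block. -/
lemma labels_coset (γ x y : Γ) (hy : y ≠ 0) (hxy : ∀ k : ℤ, (2 : ℤ) • x + k • y ≠ γ) (n : ℕ) :
    ∃ (α : ℕ → Γ) (y : Γ), (∀ c, n ≤ c → c < 3 * n → α c = 0) ∧
      (∀ i < n, α i + α (3 * n + i) + y = γ) ∧
      ∀ P Q : APath (gridG n) (gridA n), P.weight (gridLab α y n) = γ →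
        Q.weight (gridLab α y n) = γ → ¬ P.VDisjoint Q := by
  let α : ℕ → Γ := fun c => if c < n then x else if c < 3 * n then 0 else γ - x - y
  have hα : ∀ c, n ≤ c → c < 3 * n → α c = 0 := by
    intro c h1 h2
    simp only [α]
    rw [if_neg (by omega), if_pos h2]
  have hl : ∀ c, c < n → α c = x := fun c hc => by simp only [α, if_pos hc]
  have hr : ∀ c, 3 * n ≤ c → α c = γ - x - y := by
    intro c h1
    simp only [α]
    rw [if_neg (by omega), if_neg (by omega)]
  have hvisit : ∀ P : APath (gridG n) (gridA n), P.weight (gridLab α y n) = γ →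
      ∃ z ∈ P.walk.support, ∃ u ∈ P.walk.support, ∃ z' ∈ P.walk.support,
        (pos z).2 = 0 ∧ (pos u).2 = 0 ∧ (pos z').2 = 0 ∧
        (pos z).1 < n ∧ n ≤ (pos u).1 ∧ (pos u).1 < 3 * n ∧ 3 * n ≤ (pos z').1 := by
    intro P hP
    obtain ⟨m, hm, hm'⟩ := APath.weight_eq (y := y) hα P
    rw [hP] at hm
    have hf := P.firstMem
    have hl' := P.lastMem
    have hmix : γ = x + (γ - x - y) + m • y → m ≠ 0 := by
      rintro h rfl
      apply hy
      have h4 := sub_eq_zero.2 h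
      rw [← h4, zero_smul]
      abel
    rcases hf.2 with h1 | h1 <;> rcases hl'.2 with h2 | h2
    · rw [hl _ h1, hl _ h2] at hm
      refine absurd ?_ (hxy m)
      rw [hm, two_zsmul]
    · rw [hl _ h1, hr _ h2] at hm
      obtain ⟨u, hu, hu0, hu1, hu2⟩ := hm' (hmix hm)
      exact ⟨_, P.walk.start_mem_support, u, hu, _, P.walk.end_mem_support, hf.1, hu0, hl'.1,
        h1, hu1, hu2, h2⟩
    · rw [hr _ h1, hl _ h2, add_comm (γ - x - y)] at hm
      obtain ⟨u, hu, hu0, hu1, hu2⟩ := hm' (hmix hm)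
      exact ⟨_, P.walk.end_mem_support, u, hu, _, P.walk.start_mem_support, hl'.1, hu0, hf.1,
        h2, hu1, hu2, h1⟩
    · rw [hr _ h1, hr _ h2] at hm
      -- `γ = 2 (γ - x - y) + m y` rearranges to `γ = 2 x + (2 - m) y`.
      refine absurd ?_ (hxy (2 - m))
      have h4 := sub_eq_zero.2 hm
      rw [← sub_eq_zero, ← h4, sub_zsmul, two_zsmul, two_zsmul]
      abel
  refine ⟨α, y, hα, ?_, ?_⟩
  · intro i hi
    rw [hl i hi, hr _ (by omega)]
    abel
  · intro P Q hP hQ hd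
    obtain ⟨a, ha, u, hu, b, hb, ha0, hu0, hb0, h1, h2, h3, h4⟩ := hvisit P hP
    obtain ⟨a', ha', u', hu', b', hb', ha0', hu0', hb0', h1', h2', h3', h4'⟩ := hvisit Q hQ
    rcases lt_trichotomy (pos u).1 (pos u').1 with h | h | h
    · exact crossing Q.walk P.walk ha' hu' hu hb ha0' hu0 hu0' hb0 (by omega) h (by omega) hd.symm
    · have : u = u' := pos_injective (Prod.ext h (hu0.trans hu0'.symm))
      exact hd hu (this ▸ hu')
    · exact crossing P.walk Q.walk ha hu hu' hb' ha0 hu0' hu0 hb0' (by omega) h (by omega) hd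

end Avoiding

/-- Let `Γ` be an Abelian group and `γ ∈ Γ`. If `Γ` is
infinite, or there are `x, y ∈ Γ` with `y ≠ 0` such that `2x + ny ≠ γ` for
every `n ∈ ℤ`, then the `A`-paths of weight `γ` do not have the Erdős–Pósa
property. -/
theorem gamma_APaths_not_erdosPosa (Γ : Type) [AddCommGroup Γ] (γ : Γ)
    (h : Infinite Γ ∨
      ∃ x y : Γ, y ≠ 0 ∧ ∀ n : ℤ, (2 : ℤ) • x + n • y ≠ γ) :
    ¬ HasEPP Γ (fun _ _ _ lab P => P.weight lab = γ) := by
  rcases h with h | ⟨x, y, hy, hxy⟩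
  · exact not_hasEPP γ (labels_infinite γ)
  · exact not_hasEPP γ (labels_coset γ x y hy hxy)
end

section
/- Let Γ be an Abelian group and let G be a Γ-labelled graph containing a vertex set B such that every B-path in G has weight zero. Let M be the set of vertices v of G that have three paths from v to B \ {v}, pairwise disjoint except for the common endvertex v, each with no interior vertex in B. Then for every v ∈ M there is an element γ_v ∈ Γ with 2γ_v = 0 such that every path from v to B (with no interior vertex in B) has weight γ_v. Moreover, for v, w ∈ M, if every path from v to B and every path from w to B has weight zero, then every path in G with endvertices v and w has weight zero. -/
/-!
Fix `v ∈ M` outside `B`, with a fan of three legs `L₀, L₁, L₂`. Two legs form a `B`-path, so their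
weights sum to zero pairwise, and all three equal one element `γ` with `2γ = 0`.

Let `P` be a path from `v` to `B`. Following a leg `Lⱼ` backwards from `B` until it first meets `P`
gives a *tail* `Tⱼ`, which meets `P` only in its first vertex `uⱼ` (`exists_tail`). If `uⱼ = v`,
then `Lⱼ ∪ P` is a `B`-path and `P` has weight `γ`. Otherwise take two tails, with `x = uⱼ` before
`y = uₖ` on `P`, and write `P = A C D` with `A` from `v` to `x` and `C` from `x` to `y`. Then
`w(P) = w(A C Tₖ) + w(Tⱼ C D) - w(Tⱼ C Tₖ)`,
where the last two paths are `B`-paths and hence zero, while the first has weight `γ` by induction.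
The induction (`fan_weight`) is on the length of the part `P` of a path `P T`, where `T` avoids two
of the legs.

For paths `P` between `v, w ∈ M`, vertices of `B` on `P` are used to cut it up (`weight_zero`). If
there are none, the tails of two legs at `v` give the same decomposition, in which now `A C Tₖ` is a
path from `v` to `B`, and `Tⱼ C D` is a path from `w` to `B`.
-/

open SimpleGraph

/-- `p` is a path from the vertex `v` to the set `B`: its other endvertex `b`
lies in `B` and it has no interior vertex in `B`. -/
def IsPathTo {V : Type} (G : SimpleGraph V) (B : Set V) {v b : V}
    (p : G.Walk v b) : Prop :=
  p.IsPath ∧ b ∈ B ∧ ∀ x ∈ p.support, x ∈ B → x = v ∨ x = b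

/-- `v` has three paths to `B \ {v}`, pairwise disjoint except for the common
endvertex `v`, each with no interior vertex in `B`. -/
def InM {V : Type} (G : SimpleGraph V) (B : Set V) (v : V) : Prop :=
  ∃ (b₁ b₂ b₃ : V) (p₁ : G.Walk v b₁) (p₂ : G.Walk v b₂) (p₃ : G.Walk v b₃),
    b₁ ∈ B \ {v} ∧ b₂ ∈ B \ {v} ∧ b₃ ∈ B \ {v} ∧
    IsPathTo G B p₁ ∧ IsPathTo G B p₂ ∧ IsPathTo G B p₃ ∧
    (∀ x, x ∈ p₁.support → x ∈ p₂.support → x = v) ∧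
    (∀ x, x ∈ p₁.support → x ∈ p₃.support → x = v) ∧
    (∀ x, x ∈ p₂.support → x ∈ p₃.support → x = v)

/-! ### Walks, their weights, and tails -/

section Aux

variable {V Γ : Type} [AddCommGroup Γ] {G : SimpleGraph V} {lab : Sym2 V → Γ} {B : Set V}

lemma walkWeight_append {u v w : V} (p : G.Walk u v) (q : G.Walk v w) :
    walkWeight lab (p.append q) = walkWeight lab p + walkWeight lab q := by
  simp [walkWeight]

lemma walkWeight_reverse {u v : V} (p : G.Walk u v) :
    walkWeight lab p.reverse = walkWeight lab p := by
  simp [walkWeight, List.sum_reverse]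

lemma isPath_append_iff {u v w : V} (p : G.Walk u v) (q : G.Walk v w) :
    (p.append q).IsPath ↔
      p.IsPath ∧ q.IsPath ∧ ∀ x ∈ p.support, x ∈ q.support → x = v := by
  induction p with
  | nil => simp
  | cons h p ih =>
    simp only [Walk.cons_append, Walk.cons_isPath_iff, ih, Walk.mem_support_append_iff,
      Walk.support_cons, List.mem_cons]
    have := p.end_mem_support
    grind

/-- The last piece of a walk `L` after its final visit to `S`. -/
lemma exists_tail (S : Set V) {v b : V} (L : G.Walk v b) (h : ∃ x ∈ L.support, x ∈ S) :
    ∃ (u : V) (A : G.Walk v u) (T : G.Walk u b), L = A.append T ∧ u ∈ S ∧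
      ∀ x ∈ T.support, x ∈ S → x = u := by
  induction L with
  | nil => exact ⟨_, .nil, .nil, rfl, by simpa using h, by simp⟩
  | @cons a c d hadj p ih =>
    by_cases hp : ∃ x ∈ p.support, x ∈ S
    · obtain ⟨u, A, T, rfl, hu, hT⟩ := ih hp
      exact ⟨u, .cons hadj A, T, rfl, hu, hT⟩
    · refine ⟨a, .nil, .cons hadj p, rfl, ?_, ?_⟩ <;>
        simp only [Walk.support_cons, List.mem_cons] at * <;> grind

lemma exists_split {u w x y : V} (P : G.Walk u w) (hx : x ∈ P.support) (hy : y ∈ P.support) :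
    (∃ (A : G.Walk u x) (C : G.Walk x y) (D : G.Walk y w), P = A.append (C.append D)) ∨
    (∃ (A : G.Walk u y) (C : G.Walk y x) (D : G.Walk x w), P = A.append (C.append D)) := by
  obtain ⟨A, D, rfl⟩ := Walk.mem_support_iff_exists_append.1 hx
  rcases (Walk.mem_support_append_iff A D).1 hy with h | h
  · obtain ⟨A, C, rfl⟩ := Walk.mem_support_iff_exists_append.1 h
    exact .inr ⟨A, C, D, by rw [Walk.append_assoc]⟩
  · obtain ⟨C, D, rfl⟩ := Walk.mem_support_iff_exists_append.1 h
    exact .inl ⟨A, C, D, rfl⟩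

variable (lab B) in
/-- Every `B`-path has weight zero. -/
def AllZero (G : SimpleGraph V) : Prop :=
  ∀ (u v : V) (p : G.Walk u v), p.IsPath → u ≠ v → u ∈ B → v ∈ B →
      (∀ x ∈ p.support, x ∈ B → x = u ∨ x = v) → walkWeight lab p = 0

/-- A path `Q` extended by disjoint paths `T`, `T'` to `B` at its two ends is a `B`-path. -/
lemma ear_zero (hB : AllZero lab B G) {x y b b' : V} (T : G.Walk x b) (Q : G.Walk x y)
    (T' : G.Walk y b') (hT : T.IsPath) (hQ : Q.IsPath) (hT' : T'.IsPath)
    (hb : b ∈ B) (hb' : b' ∈ B)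
    (h1 : ∀ z ∈ T.support, z ∈ Q.support → z = x)
    (h2 : ∀ z ∈ Q.support, z ∈ T'.support → z = y)
    (h3 : ∀ z ∈ T.support, z ∉ T'.support)
    (hTB : ∀ z ∈ T.support, z ∈ B → z = b)
    (hQB : ∀ z ∈ Q.support, z ∈ B → z = b ∨ z = b')
    (hTB' : ∀ z ∈ T'.support, z ∈ B → z = b') :
    walkWeight lab T + walkWeight lab Q + walkWeight lab T' = 0 := by
  have hne : b ≠ b' := by
    rintro rfl
    exact h3 _ T.end_mem_support T'.end_mem_support
  have := hB b b' (T.reverse.append (Q.append T'))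
    (by simp only [isPath_append_iff, Walk.isPath_reverse_iff, Walk.mem_support_append_iff,
          Walk.support_reverse, List.mem_reverse]; grind)
    hne hb hb'
    (by simp only [Walk.mem_support_append_iff, Walk.support_reverse, List.mem_reverse]; grind)
  rw [walkWeight_append, walkWeight_append, walkWeight_reverse] at this
  rw [← this]; abel

/-! ### Fans -/

/-- Three paths `L i` from `v ∉ B` to `B` that are disjoint except for `v`. -/
structure IsFan (G : SimpleGraph V) (B : Set V) (v : V) (b : Fin 3 → V)
    (L : ∀ i, G.Walk v (b i)) : Prop where
  notMem : v ∉ B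
  path : ∀ i, (L i).IsPath
  mem : ∀ i, b i ∈ B
  clean : ∀ i, ∀ z ∈ (L i).support, z ∈ B → z = b i
  disj : ∀ i j, i ≠ j → ∀ z ∈ (L i).support, z ∈ (L j).support → z = v

lemma InM.exists_fan {v : V} (h : InM G B v) (hv : v ∉ B) :
    ∃ (b : Fin 3 → V) (L : ∀ i, G.Walk v (b i)), IsFan G B v b L := by
  obtain ⟨b₁, b₂, b₃, p₁, p₂, p₃, -, -, -, ⟨h1, h1', h1''⟩, ⟨h2, h2', h2''⟩, ⟨h3, h3', h3''⟩,
    h12, h13, h23⟩ := h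
  refine ⟨![b₁, b₂, b₃], fun i => match i with | 0 => p₁ | 1 => p₂ | 2 => p₃, hv, ?_, ?_, ?_, ?_⟩
  · intro i; fin_cases i <;> assumption
  · intro i; fin_cases i <;> assumption
  · intro i; fin_cases i
    · intro z hz hzB; exact (h1'' z hz hzB).resolve_left (by rintro rfl; exact hv hzB)
    · intro z hz hzB; exact (h2'' z hz hzB).resolve_left (by rintro rfl; exact hv hzB)
    · intro z hz hzB; exact (h3'' z hz hzB).resolve_left (by rintro rfl; exact hv hzB)
  · intro i j hij z hz hz'
    fin_cases i <;> fin_cases j <;> first | exact absurd rfl hij | skip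
    · exact h12 z hz hz'
    · exact h13 z hz hz'
    · exact h12 z hz' hz
    · exact h23 z hz hz'
    · exact h13 z hz' hz
    · exact h23 z hz' hz

lemma IsFan.weight {v : V} {b : Fin 3 → V} {L : ∀ i, G.Walk v (b i)} (hF : IsFan G B v b L)
    (hB : AllZero lab B G) :
    ∃ γ : Γ, γ + γ = 0 ∧ ∀ i, walkWeight lab (L i) = γ := by
  have key : ∀ i j, i ≠ j → walkWeight lab (L i) + walkWeight lab (L j) = 0 := by
    intro i j hij
    have hv : ∀ i, v ≠ b i := fun i h => hF.notMem (h ▸ hF.mem i)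
    have := hB (b i) (b j) ((L i).reverse.append (L j))
      (by
        have := hF.path i
        have := hF.path j
        have := hF.disj i j hij
        simp only [isPath_append_iff, Walk.isPath_reverse_iff, Walk.support_reverse,
          List.mem_reverse]
        grind)
      (fun h => hv i (hF.disj i j hij _ (L i).end_mem_support
        (by rw [h]; exact (L j).end_mem_support)).symm)
      (hF.mem i) (hF.mem j)
      (by
        have := hF.clean i
        have := hF.clean j
        simp only [Walk.mem_support_append_iff, Walk.support_reverse, List.mem_reverse]
        grind)
    rwa [walkWeight_append, walkWeight_reverse] at this
  have h01 := key 0 1 (by decide)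
  have h02 := key 0 2 (by decide)
  have h12 := key 1 2 (by decide)
  have e12 : walkWeight lab (L 1) = walkWeight lab (L 2) := add_left_cancel (h01.trans h02.symm)
  have e02 : walkWeight lab (L 0) = walkWeight lab (L 2) := by
    rw [add_comm] at h12; exact add_right_cancel (h01.trans h12.symm)
  refine ⟨walkWeight lab (L 2), by rwa [e12] at h12, fun i => ?_⟩
  fin_cases i
  exacts [e02, e12, rfl]

/-- The tail of a leg behind its last vertex `u` on `P`. If `u` is the centre of the fan, then the
tail is the whole leg and has its weight. -/
lemma IsFan.exists_tail {v w : V} {b : Fin 3 → V} {L : ∀ i, G.Walk v (b i)}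
    (hF : IsFan G B v b L) (P : G.Walk v w) (j : Fin 3) :
    ∃ (u : V) (T : G.Walk u (b j)), T.IsPath ∧ u ∈ P.support ∧
      (∀ z ∈ T.support, z ∈ (L j).support) ∧ (∀ z ∈ T.support, z ∈ P.support → z = u) ∧
      (u = v → walkWeight lab T = walkWeight lab (L j)) := by
  obtain ⟨u, A, T, hL, hu, hT⟩ := _root_.exists_tail {z | z ∈ P.support} (L j)
    ⟨v, (L j).start_mem_support, P.start_mem_support⟩
  have hp := hF.path j
  rw [hL, isPath_append_iff] at hp
  refine ⟨u, T, hp.2.1, hu, fun z hz => by rw [hL]; simp [hz], hT, ?_⟩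
  rintro rfl
  have hA : A = .nil := (Walk.isPath_iff_nil.1 hp.1).eq_nil
  rw [hL, hA, Walk.nil_append]

/-! ### Paths from a vertex to `B` -/

/-- A path `P T` from the centre of a fan to `B` has the weight of the legs, provided that `T`
avoids all legs but one. -/
lemma fan_weight (hB : AllZero lab B G) {v : V} {c : Fin 3 → V} {L : ∀ i, G.Walk v (c i)}
    (hF : IsFan G B v c L) {γ : Γ} (hγ : γ + γ = 0) (hL : ∀ i, walkWeight lab (L i) = γ)
    (n : ℕ) : ∀ (u b : V) (P : G.Walk v u) (T : G.Walk u b), P.length = n →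
      P.IsPath → T.IsPath → (∀ z ∈ P.support, z ∈ T.support → z = u) → b ∈ B →
      (∀ z ∈ P.support, z ∈ B → z = b) → (∀ z ∈ T.support, z ∈ B → z = b) →
      (∃ i₀, ∀ i, i ≠ i₀ → ∀ z ∈ T.support, z ∉ (L i).support) →
      walkWeight lab P + walkWeight lab T = γ := by
  induction n using Nat.strong_induction_on with
  | _ n ih =>
  intro u b P T hn hP hT hPT hb hPB hTB ⟨i₀, hi₀⟩
  obtain ⟨j, k, hjk, hj, hk⟩ : ∃ j k : Fin 3, j ≠ k ∧ j ≠ i₀ ∧ k ≠ i₀ := by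
    clear hi₀; revert i₀; decide
  obtain ⟨x, X, hX, hxP, hXL, hXP, hXw⟩ := hF.exists_tail (lab := lab) P j
  obtain ⟨y, Y, hY, hyP, hYL, hYP, hYw⟩ := hF.exists_tail (lab := lab) P k
  -- a leg that meets `P` in `v` only completes `P T` to a `B`-path
  have triv : ∀ i, i ≠ i₀ → ∀ Z : G.Walk v (c i), Z.IsPath →
      (∀ z ∈ Z.support, z ∈ (L i).support) → (∀ z ∈ Z.support, z ∈ P.support → z = v) →
      walkWeight lab Z = walkWeight lab (L i) → walkWeight lab P + walkWeight lab T = γ := by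
    intro i hi Z hZ hZL hZP hw
    have := ear_zero hB Z P T hZ hP hT (hF.mem i) hb hZP hPT
      (fun z hz hz' => hi₀ i hi z hz' (hZL z hz))
      (fun z hz => hF.clean i z (hZL z hz)) (fun z hz hzB => .inr (hPB z hz hzB)) hTB
    rw [hw, hL] at this
    rw [add_assoc] at this
    exact add_left_cancel (this.trans hγ.symm)
  by_cases hxv : x = v
  · subst hxv
    exact triv j hj X hX hXL hXP (hXw rfl)
  by_cases hyv : y = v
  · subst hyv
    exact triv k hk Y hY hYL hYP (hYw rfl)
  have key : ∀ (j k : Fin 3), j ≠ k → j ≠ i₀ → k ≠ i₀ → ∀ (x y : V) (X : G.Walk x (c j))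
      (Y : G.Walk y (c k)), x ≠ v → y ≠ v → X.IsPath → Y.IsPath →
      (∀ z ∈ X.support, z ∈ (L j).support) → (∀ z ∈ Y.support, z ∈ (L k).support) →
      (∀ z ∈ X.support, z ∈ P.support → z = x) → (∀ z ∈ Y.support, z ∈ P.support → z = y) →
      (∃ (A : G.Walk v x) (C : G.Walk x y) (D : G.Walk y u), P = A.append (C.append D)) →
      walkWeight lab P + walkWeight lab T = γ := by
    clear! j k x y
    rintro j k hjk hj hk x y X Y hxv hyv hX hY hXL hYL hXP hYP ⟨A, C, D, rfl⟩
    have hvP : v ∈ (A.append (C.append D)).support := Walk.start_mem_support _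
    have hvX : v ∉ X.support := fun h => hxv (hXP v h hvP).symm
    have hvY : v ∉ Y.support := fun h => hyv (hYP v h hvP).symm
    have hXY : ∀ z ∈ X.support, z ∉ Y.support := fun z hz hz' =>
      hvX (hF.disj j k hjk z (hXL z hz) (hYL z hz') ▸ hz)
    have hXT : ∀ z ∈ X.support, z ∉ T.support := fun z hz hz' => hi₀ j hj z hz' (hXL z hz)
    have hYT : ∀ z ∈ Y.support, z ∉ T.support := fun z hz hz' => hi₀ k hk z hz' (hYL z hz)
    have hbT := T.end_mem_support
    have hyu : y ≠ u := fun h => hYT y Y.start_mem_support (h ▸ T.start_mem_support)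
    have hDlen : D.length ≠ 0 := fun h => hyu (Walk.eq_of_length_eq_zero h)
    have hXB : ∀ z ∈ X.support, z ∈ B → z = c j := fun z hz => hF.clean j z (hXL z hz)
    have hYB : ∀ z ∈ Y.support, z ∈ B → z = c k := fun z hz => hF.clean k z (hYL z hz)
    have hxX := X.start_mem_support
    have hyY := Y.start_mem_support
    have hyD := D.start_mem_support
    have huD := D.end_mem_support
    have hxC := C.start_mem_support
    have hyC := C.end_mem_support
    simp only [isPath_append_iff, Walk.mem_support_append_iff, Walk.length_append] at *
    obtain ⟨hA, ⟨hC, hD, hCD⟩, hACD⟩ := hP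
    -- `b` lies on neither `A` nor `C`: it is on `T`, which meets `P` in `u` only
    have hACB : ∀ z, z ∈ A.support ∨ z ∈ C.support → z ∉ B := by
      intro z hz hzB
      have h1 : z = b := hPB z (by tauto) hzB
      have h2 : z = u := hPT z (by tauto) (h1 ▸ hbT)
      have h3 : z ∈ D.support := h2 ▸ huD
      have h4 : z = y := by
        rcases hz with hz | hz
        · have h5 := hACD z hz (.inr h3)
          exact hCD z (h5 ▸ hxC) h3
        · exact hCD z hz h3
      exact hyu (h4.symm.trans h2)
    have e1 : walkWeight lab (A.append C) + walkWeight lab Y = γ := by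
      refine ih (A.append C).length (by rw [Walk.length_append]; omega) y _ (A.append C) Y rfl
        ?_ hY ?_ (hF.mem k) ?_ hYB ⟨k, ?_⟩
      · rw [isPath_append_iff]
        exact ⟨hA, hC, fun z hz hz' => hACD z hz (.inl hz')⟩
      · intro z hz hz'
        rw [Walk.mem_support_append_iff] at hz
        exact hYP z hz' (by tauto)
      · intro z hz hzB
        rw [Walk.mem_support_append_iff] at hz
        exact absurd hzB (hACB z hz)
      · intro i hi z hz hz'
        exact hvY (hF.disj i k hi z hz' (hYL z hz) ▸ hz)
    have e2 : walkWeight lab X + walkWeight lab (C.append D) + walkWeight lab T = 0 := by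
      refine ear_zero hB X (C.append D) T hX ?_ hT (hF.mem j) hb ?_ ?_ hXT hXB ?_ hTB
      · rw [isPath_append_iff]; exact ⟨hC, hD, hCD⟩
      all_goals
        intro z hz
        simp only [Walk.mem_support_append_iff] at *
        grind
    have e3 : walkWeight lab X + walkWeight lab C + walkWeight lab Y = 0 := by
      refine ear_zero hB X C Y hX hC hY (hF.mem j) (hF.mem k) ?_ ?_ hXY hXB ?_ hYB
      all_goals
        intro z hz
        grind
    simp only [walkWeight_append] at *
    calc _ = (walkWeight lab A + walkWeight lab C + walkWeight lab Y)
          + (walkWeight lab X + (walkWeight lab C + walkWeight lab D) + walkWeight lab T)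
          - (walkWeight lab X + walkWeight lab C + walkWeight lab Y) := by abel
      _ = γ := by rw [e1, e2, e3]; abel
  rcases exists_split P hxP hyP with h | h
  · exact key j k hjk hj hk x y X Y hxv hyv hX hY hXL hYL hXP hYP h
  · exact key k j hjk.symm hk hj y x Y X hyv hxv hY hX hYL hXL hYP hXP h

lemma exists_weight (hB : AllZero lab B G) {v : V} (hv : InM G B v) :
    ∃ γ : Γ, γ + γ = 0 ∧
      ∀ (b : V) (p : G.Walk v b), IsPathTo G B p → walkWeight lab p = γ := by
  by_cases hvB : v ∈ B
  · refine ⟨0, by simp, fun b p ⟨hp, hb, h⟩ => ?_⟩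
    by_cases hvb : v = b
    · subst hvb
      rw [(Walk.isPath_iff_nil.1 hp).eq_nil]; simp [walkWeight]
    · exact hB v b p hp hvb hvB hb h
  obtain ⟨c, L, hF⟩ := hv.exists_fan hvB
  obtain ⟨γ, hγ, hL⟩ := hF.weight hB
  refine ⟨γ, hγ, fun b p ⟨hp, hb, h⟩ => ?_⟩
  -- `b` lies on at most one leg
  have hone : ∃ i₀, ∀ i, i ≠ i₀ → b ∉ (L i).support := by
    by_cases h0 : ∃ i₀, b ∈ (L i₀).support
    · obtain ⟨i₀, h0⟩ := h0
      exact ⟨i₀, fun i hi hbi => hvB (hF.disj i i₀ hi b hbi h0 ▸ hb)⟩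
    · exact ⟨0, fun i _ hi => h0 ⟨i, hi⟩⟩
  obtain ⟨i₀, hi₀⟩ := hone
  have := fan_weight hB hF hγ hL p.length b b p .nil rfl hp (by simp) (by simp) hb
    (by grind) (by simp) ⟨i₀, by simpa using hi₀⟩
  simpa [walkWeight] using this

/-! ### Paths between two vertices -/

/-- A path from `v` to `w` has weight zero if all paths from `v` and from `w` to `B` do. Besides
members of `M`, vertices of `B` are allowed for `v`, so that a path can be cut at its vertices in
`B`. The proof needs a fan at one end only. -/
lemma weight_zero (hB : AllZero lab B G) (n : ℕ) : ∀ (v w : V), (InM G B v ∨ v ∈ B) →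
      (∀ (b : V) (p : G.Walk v b), IsPathTo G B p → walkWeight lab p = 0) →
      (∀ (b : V) (p : G.Walk w b), IsPathTo G B p → walkWeight lab p = 0) →
      ∀ p : G.Walk v w, p.length = n → p.IsPath → walkWeight lab p = 0 := by
  induction n using Nat.strong_induction_on with
  | _ n ih =>
  intro v w hv hv0 hw0 P hn hP
  by_cases hint : ∃ b ∈ P.support, b ∈ B ∧ b ≠ v ∧ b ≠ w
  · obtain ⟨b, hbP, hb, hbv, hbw⟩ := hint
    have hb0 : ∀ (c : V) (p : G.Walk b c), IsPathTo G B p → walkWeight lab p = 0 := by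
      rintro c p ⟨hp, hc, h⟩
      by_cases hbc : b = c
      · subst hbc
        rw [(Walk.isPath_iff_nil.1 hp).eq_nil]; simp [walkWeight]
      · exact hB b c p hp hbc hb hc h
    obtain ⟨A, D, hA, hD, rfl⟩ := hP.mem_support_iff_exists_append.1 hbP
    have hAlen : A.length ≠ 0 := fun h => hbv (Walk.eq_of_length_eq_zero h).symm
    have hDlen : D.length ≠ 0 := fun h => hbw (Walk.eq_of_length_eq_zero h)
    rw [Walk.length_append] at hn
    rw [walkWeight_append, ih A.length (by omega) v b hv hv0 hb0 A rfl hA,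
      ih D.length (by omega) b w (.inr hb) hb0 hw0 D rfl hD, add_zero]
  have hint' : ∀ x ∈ P.support, x ∈ B → x = v ∨ x = w := by grind
  by_cases hwB : w ∈ B
  · exact hv0 w P ⟨hP, hwB, hint'⟩
  by_cases hvB : v ∈ B
  · rw [← walkWeight_reverse]
    refine hw0 v P.reverse ⟨hP.reverse, hvB, ?_⟩
    simp only [Walk.support_reverse, List.mem_reverse]
    grind
  have hPB : ∀ x ∈ P.support, x ∉ B := by grind
  obtain ⟨c, L, hF⟩ := (hv.resolve_right hvB).exists_fan hvB
  obtain ⟨x, X, hX, hxP, hXL, hXP, -⟩ := hF.exists_tail (lab := lab) P 0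
  obtain ⟨y, Y, hY, hyP, hYL, hYP, -⟩ := hF.exists_tail (lab := lab) P 1
  have triv : ∀ i, ∀ Z : G.Walk v (c i), Z.IsPath →
      (∀ z ∈ Z.support, z ∈ (L i).support) → (∀ z ∈ Z.support, z ∈ P.support → z = v) →
      walkWeight lab P = 0 := by
    intro i Z hZ hZL hZP
    have hc := hF.clean i
    have e1 := hv0 _ Z ⟨hZ, hF.mem i, by grind⟩
    have e2 := hw0 _ (P.reverse.append Z) ⟨by
        simp only [isPath_append_iff, Walk.isPath_reverse_iff, Walk.support_reverse,
          List.mem_reverse]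
        grind, hF.mem i, by
        simp only [Walk.mem_support_append_iff, Walk.support_reverse, List.mem_reverse]
        grind⟩
    rwa [walkWeight_append, walkWeight_reverse, e1, add_zero] at e2
  by_cases hxv : x = v
  · subst hxv
    exact triv 0 X hX hXL hXP
  by_cases hyv : y = v
  · subst hyv
    exact triv 1 Y hY hYL hYP
  have key : ∀ (j k : Fin 3), j ≠ k → ∀ (x y : V) (X : G.Walk x (c j))
      (Y : G.Walk y (c k)), x ≠ v → X.IsPath → Y.IsPath →
      (∀ z ∈ X.support, z ∈ (L j).support) → (∀ z ∈ Y.support, z ∈ (L k).support) →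
      (∀ z ∈ X.support, z ∈ P.support → z = x) → (∀ z ∈ Y.support, z ∈ P.support → z = y) →
      (∃ (A : G.Walk v x) (C : G.Walk x y) (D : G.Walk y w), P = A.append (C.append D)) →
      walkWeight lab P = 0 := by
    clear! x y
    rintro j k hjk x y X Y hxv hX hY hXL hYL hXP hYP ⟨A, C, D, rfl⟩
    have hvP : v ∈ (A.append (C.append D)).support := Walk.start_mem_support _
    have hvX : v ∉ X.support := fun h => hxv (hXP v h hvP).symm
    have hXY : ∀ z ∈ X.support, z ∉ Y.support := fun z hz hz' =>
      hvX (hF.disj j k hjk z (hXL z hz) (hYL z hz') ▸ hz)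
    have hXB : ∀ z ∈ X.support, z ∈ B → z = c j := fun z hz => hF.clean j z (hXL z hz)
    have hYB : ∀ z ∈ Y.support, z ∈ B → z = c k := fun z hz => hF.clean k z (hYL z hz)
    clear hint hint' ih triv hn
    simp only [isPath_append_iff, Walk.mem_support_append_iff] at *
    obtain ⟨hA, ⟨hC, hD, hCD⟩, hACD⟩ := hP
    have e1 := hv0 _ ((A.append C).append Y) ⟨by
        simp only [isPath_append_iff, Walk.mem_support_append_iff]
        grind, hF.mem k, by
        simp only [Walk.mem_support_append_iff]
        grind⟩
    have e2 := hw0 _ ((C.append D).reverse.append X) ⟨by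
        simp only [isPath_append_iff, Walk.isPath_reverse_iff, Walk.support_reverse,
          List.mem_reverse, Walk.mem_support_append_iff]
        grind, hF.mem j, by
        simp only [Walk.mem_support_append_iff, Walk.support_reverse, List.mem_reverse]
        grind⟩
    have e3 : walkWeight lab X + walkWeight lab C + walkWeight lab Y = 0 := by
      refine ear_zero hB X C Y hX hC hY (hF.mem j) (hF.mem k) ?_ ?_ hXY hXB ?_ hYB
      all_goals
        intro z hz
        grind
    simp only [walkWeight_append, walkWeight_reverse] at *
    calc _ = (walkWeight lab A + walkWeight lab C + walkWeight lab Y)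
          + (walkWeight lab C + walkWeight lab D + walkWeight lab X)
          - (walkWeight lab X + walkWeight lab C + walkWeight lab Y) := by abel
      _ = 0 := by rw [e1, e2, e3]; abel
  rcases exists_split P hxP hyP with h | h
  · exact key 0 1 (by decide) x y X Y hxv hX hY hXL hYL hXP hYP h
  · exact key 1 0 (by decide) y x Y X hyv hY hX hYL hXL hYP hXP h

end Aux

/-- If every `B`-path in `G` has weight zero, then every
vertex `v ∈ M` has an element `γ_v` of order at most `2` such that every path
from `v` to `B` has weight `γ_v`; moreover, if for `v, w ∈ M` all paths from
`v` to `B` and from `w` to `B` are zero, then every path between `v` and `w`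
is zero. -/
theorem zeroM (Γ : Type) [AddCommGroup Γ] (V : Type) [Fintype V]
    (G : SimpleGraph V) (lab : Sym2 V → Γ) (B : Set V)
    (hB : ∀ (u v : V) (p : G.Walk u v), p.IsPath → u ≠ v → u ∈ B → v ∈ B →
      (∀ x ∈ p.support, x ∈ B → x = u ∨ x = v) → walkWeight lab p = 0) :
    (∀ v : V, InM G B v → ∃ γv : Γ, γv + γv = 0 ∧
      ∀ (b : V) (p : G.Walk v b), IsPathTo G B p → walkWeight lab p = γv) ∧
    (∀ v w : V, InM G B v → InM G B w →
      (∀ (b : V) (p : G.Walk v b), IsPathTo G B p → walkWeight lab p = 0) →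
      (∀ (b : V) (p : G.Walk w b), IsPathTo G B p → walkWeight lab p = 0) →
      ∀ p : G.Walk v w, p.IsPath → walkWeight lab p = 0) := by
  exact ⟨fun v hv => exists_weight hB hv, fun v w hv _ hv0 hw0 p hp =>
    weight_zero hB p.length v w (.inl hv) hv0 hw0 p rfl hp⟩
end

section
/- Let Γ be an Abelian group and let G be a Γ-labelled graph containing a vertex set B such that every B-path in G has weight zero. If a vertex u has three paths P₁, P₂, P₃ from u to vertices of B \ {u}, pairwise disjoint except for the common endvertex u and each with no interior vertex in B, then there is an element γ ∈ Γ with 2γ = 0 such that each of P₁, P₂ and P₃ has weight γ. -/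
/-!
If `u ∈ B`, each `Pᵢ` is itself a `B`-path, so all three weights vanish and `γ = 0` works.

If `u ∉ B`, then for `i ≠ j` traversing `Pᵢ` backwards and then `Pⱼ` gives a `B`-path through `u`
(`weight_add_weight_eq_zero`), so `wᵢ + wⱼ = 0` for the weights. The three equations
`w₁ + w₂ = w₁ + w₃ = w₂ + w₃ = 0` force `w₁ = w₂ = w₃ = γ` with `γ + γ = 0`.
-/

open SimpleGraph

/-- Two paths from `u ∉ B` to `B` which meet only in `u` combine to a `B`-path through `u`, so
their weights sum to zero when every `B`-path has weight zero. -/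
lemma weight_add_weight_eq_zero {Γ V : Type} [AddCommGroup Γ] {G : SimpleGraph V}
    {lab : Sym2 V → Γ} {B : Set V}
    (hB : ∀ (u v : V) (p : G.Walk u v), p.IsPath → u ≠ v → u ∈ B → v ∈ B →
      (∀ x ∈ p.support, x ∈ B → x = u ∨ x = v) → walkWeight lab p = 0)
    {u a b : V} (hu : u ∉ B) {p : G.Walk u a} {q : G.Walk u b}
    (hp : IsPathTo G B p) (hq : IsPathTo G B q)
    (hpq : ∀ x, x ∈ p.support → x ∈ q.support → x = u) :
    walkWeight lab p + walkWeight lab q = 0 := by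
  obtain ⟨hp, ha, hpB⟩ := hp
  obtain ⟨hq, hb, hqB⟩ := hq
  have hpath : (p.reverse.append q).IsPath := by
    have hq' := hq.support_nodup
    rw [← Walk.cons_tail_support, List.nodup_cons] at hq'
    rw [Walk.isPath_def, Walk.support_append, List.nodup_append']
    refine ⟨hp.reverse.support_nodup, hq'.2, fun x hx hx' => hq'.1 ?_⟩
    rw [Walk.support_reverse, List.mem_reverse] at hx
    exact hpq x hx (List.mem_of_mem_tail hx') ▸ hx'
  have hne : a ≠ b := by
    rintro rfl
    exact hu (hpq a p.end_mem_support q.end_mem_support ▸ ha)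
  have h := hB a b (p.reverse.append q) hpath hne ha hb fun x hx hxB => by
    have hxu : x ≠ u := fun h => hu (h ▸ hxB)
    rw [Walk.mem_support_append_iff, Walk.support_reverse, List.mem_reverse] at hx
    exact hx.imp (fun hx => (hpB x hx hxB).resolve_left hxu)
      (fun hx => (hqB x hx hxB).resolve_left hxu)
  simpa [walkWeight] using h

/-- If every `B`-path in `G` has weight zero and a vertex `u`
has three paths `P₁, P₂, P₃` to `B \ {u}`, pairwise disjoint except for the
common endvertex `u`, each with no interior vertex in `B`, then there is
`γ ∈ Γ` with `2γ = 0` such that each `Pᵢ` has weight `γ`. -/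
theorem three_paths_same_weight (Γ : Type) [AddCommGroup Γ] (V : Type)
    [Fintype V] (G : SimpleGraph V) (lab : Sym2 V → Γ) (B : Set V)
    (hB : ∀ (u v : V) (p : G.Walk u v), p.IsPath → u ≠ v → u ∈ B → v ∈ B →
      (∀ x ∈ p.support, x ∈ B → x = u ∨ x = v) → walkWeight lab p = 0)
    (u b₁ b₂ b₃ : V)
    (hb₁ : b₁ ∈ B \ {u}) (hb₂ : b₂ ∈ B \ {u}) (hb₃ : b₃ ∈ B \ {u})
    (P₁ : G.Walk u b₁) (P₂ : G.Walk u b₂) (P₃ : G.Walk u b₃)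
    (hP₁ : IsPathTo G B P₁) (hP₂ : IsPathTo G B P₂) (hP₃ : IsPathTo G B P₃)
    (h₁₂ : ∀ x, x ∈ P₁.support → x ∈ P₂.support → x = u)
    (h₁₃ : ∀ x, x ∈ P₁.support → x ∈ P₃.support → x = u)
    (h₂₃ : ∀ x, x ∈ P₂.support → x ∈ P₃.support → x = u) :
    ∃ γ : Γ, γ + γ = 0 ∧ walkWeight lab P₁ = γ ∧ walkWeight lab P₂ = γ ∧
      walkWeight lab P₃ = γ := by
  by_cases hu : u ∈ B
  · exact ⟨0, add_zero 0,
      hB u b₁ P₁ hP₁.1 (fun h => hb₁.2 h.symm) hu hb₁.1 hP₁.2.2,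
      hB u b₂ P₂ hP₂.1 (fun h => hb₂.2 h.symm) hu hb₂.1 hP₂.2.2,
      hB u b₃ P₃ hP₃.1 (fun h => hb₃.2 h.symm) hu hb₃.1 hP₃.2.2⟩
  · have e₁₂ := weight_add_weight_eq_zero hB hu hP₁ hP₂ h₁₂
    have e₁₃ := weight_add_weight_eq_zero hB hu hP₁ hP₃ h₁₃
    have e₂₃ := weight_add_weight_eq_zero hB hu hP₂ hP₃ h₂₃
    have e₃₂ : walkWeight lab P₃ = walkWeight lab P₂ := add_left_cancel (e₁₃.trans e₁₂.symm)
    have e₁ : walkWeight lab P₁ = walkWeight lab P₂ :=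
      add_right_cancel (e₁₃.trans e₂₃.symm)
    exact ⟨walkWeight lab P₂, e₁ ▸ e₁₂, e₁, rfl, e₃₂⟩
end

section
/- Let Γ be an infinite Abelian group and let γ ∈ Γ. Suppose it is not the case that γ = 0 and the subgroup Γ₂ = {g ∈ Γ : 2g = 0} is infinite. Then there exist x, y ∈ Γ with y ≠ 0 such that 2x + ny ≠ γ for every integer n ∈ ℤ. -/
/-!
If the conclusion fails, then `γ - 2x` lies in the cyclic group `⟨y⟩` for all `x` and all `y ≠ 0`;
in particular `γ` and every double `2x` lie in every nonzero cyclic subgroup.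

If `Γ₂` is infinite, then `γ ≠ 0`, and `γ ∈ ⟨y⟩ = {0, y}` for each nonzero `y ∈ Γ₂` forces `y = γ`,
so `Γ₂ ⊆ {0, γ}`, a contradiction.

If `Γ₂` is finite, doubling has finite fibres, so `2Γ` is infinite. As `2Γ ⊆ ⟨y⟩`, every `y ≠ 0`
has infinite order; but then `2y ∈ ⟨4y⟩` is impossible.
-/

/-- Let `Γ` be an infinite Abelian group and `γ ∈ Γ`.
If it is not the case that `γ = 0` and `Γ₂ = {g : 2g = 0}` is infinite, then
there are `x, y ∈ Γ` with `y ≠ 0` such that `2x + ny ≠ γ` for all `n ∈ ℤ`. -/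
theorem infinite_group_no_solution (Γ : Type) [AddCommGroup Γ] [Infinite Γ]
    (γ : Γ) (h : ¬ (γ = 0 ∧ {g : Γ | g + g = 0}.Infinite)) :
    ∃ x y : Γ, y ≠ 0 ∧ ∀ n : ℤ, (2 : ℤ) • x + n • y ≠ γ := by
  by_contra! hc
  have hγ : ∀ y : Γ, y ≠ 0 → ∃ n : ℤ, n • y = γ := fun y hy => by
    obtain ⟨n, hn⟩ := hc 0 y hy
    exact ⟨n, by simpa using hn⟩
  have hdouble : ∀ x y : Γ, y ≠ 0 → ∃ n : ℤ, n • y = x + x := fun x y hy => by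
    obtain ⟨n, hn⟩ := hc x y hy
    obtain ⟨m, hm⟩ := hγ y hy
    refine ⟨m - n, ?_⟩
    rw [sub_smul, hm, ← hn, two_zsmul]
    abel
  by_cases hfin : {g : Γ | g + g = 0}.Finite
  · have hinf : (Set.range fun x : Γ => x + x).Infinite := by
      intro hr
      refine Set.infinite_univ (α := Γ) ?_
      have hpre := hr.preimage' (f := fun x : Γ => x + x) ?_
      · simpa using hpre
      · rintro _ ⟨a, rfl⟩
        -- The fibre through `a` is the coset `a + Γ₂`.
        refine (hfin.image fun g => a + g).subset fun x hx => ⟨x - a, ?_, add_sub_cancel a x⟩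
        have hx' : x + x = a + a := hx
        change x - a + (x - a) = 0
        rw [sub_add_sub_comm, hx', sub_self]
    have horder : ∀ y : Γ, y ≠ 0 → ¬ IsOfFinAddOrder y := fun y hy hord => by
      refine hinf ((finite_zmultiples.2 hord).subset ?_)
      rintro _ ⟨x, rfl⟩
      obtain ⟨n, hn⟩ := hdouble x y hy
      exact ⟨n, hn⟩
    obtain ⟨y, hy⟩ := exists_ne (0 : Γ)
    have hzero : ∀ n : ℤ, n • y = 0 → n = 0 := fun n hn => by
      by_contra hne
      exact horder y hy (isOfFinAddOrder_iff_zsmul_eq_zero.2 ⟨n, hne, hn⟩)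
    have h4 : (4 : ℤ) • y ≠ 0 := fun h0 => by simpa using hzero 4 h0
    obtain ⟨n, hn⟩ := hdouble y _ h4
    have := hzero (n * 4 - 2) (by rw [sub_smul, mul_smul, hn, two_zsmul, sub_self])
    omega
  · have hγ0 : γ ≠ 0 := fun h0 => h ⟨h0, hfin⟩
    refine hfin ((Set.toFinite {0, γ}).subset fun y hy => ?_)
    have hy2 : y + y = 0 := hy
    by_cases hy0 : y = 0
    · exact Or.inl hy0
    obtain ⟨n, hn⟩ := hγ y hy0
    right
    obtain ⟨k, rfl | rfl⟩ := Int.even_or_odd' n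
    · refine absurd ?_ hγ0
      rw [← hn, mul_comm, mul_smul, two_zsmul, hy2, smul_zero]
    · change y = γ
      rw [← hn, add_smul, mul_comm, mul_smul, two_zsmul, hy2, smul_zero, one_smul, zero_add]
end

section
/- Let Γ be a finite Abelian group and γ ∈ Γ, and suppose that for all x, y ∈ Γ with y ≠ 0 there is an integer n ∈ ℤ with 2x + ny = γ. If Γ contains a non-zero element different from γ, then there exists δ ∈ Γ with 2δ = −γ. -/
/-- Let `Γ` be a finite Abelian group and `γ ∈ Γ` such that
for all `x, y ∈ Γ` with `y ≠ 0` there is `n ∈ ℤ` with `2x + ny = γ`. If `Γ`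
has a non-zero element different from `γ`, then some `δ ∈ Γ` satisfies
`2δ = -γ`. -/
theorem exists_half_of_neg (Γ : Type) [AddCommGroup Γ] [Finite Γ] (γ : Γ)
    (h : ∀ x y : Γ, y ≠ 0 → ∃ n : ℤ, (2 : ℤ) • x + n • y = γ)
    (hg : ∃ g : Γ, g ≠ 0 ∧ g ≠ γ) :
    ∃ δ : Γ, (2 : ℤ) • δ = -γ := by
  obtain ⟨g, hg0, hgγ⟩ := hg
  by_cases h2 : (2 : ℤ) • g = 0
  · -- Every multiple of `g` is now `0` or `g`; since `γ` is one and `γ ≠ g`, `γ = 0`.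
    obtain ⟨n, hn⟩ := h 0 g hg0
    rw [smul_zero, zero_add] at hn
    obtain ⟨k, rfl | rfl⟩ := Int.even_or_odd' n
    · refine ⟨0, ?_⟩
      rw [← hn, mul_comm, mul_smul, h2, smul_zero, smul_zero, neg_zero]
    · refine absurd ?_ hgγ
      rw [← hn, add_smul, mul_comm, mul_smul, h2, smul_zero, zero_add, one_smul]
  · -- The hypothesis with `x = 0`, `y = 2g` makes `γ` a multiple of `2g`.
    obtain ⟨n, hn⟩ := h 0 _ h2
    refine ⟨-(n • g), ?_⟩
    rw [← hn, smul_zero, zero_add, smul_neg, smul_comm]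
end

section
/- Let Γ be an Abelian group containing elements x′ and y′ of infinite order, and let γ ∈ Γ. Then there exist x, y ∈ Γ with y ≠ 0 such that 2x + ny ≠ γ for every integer n ∈ ℤ. -/
/-- Let `Γ` be an Abelian group containing elements `x'` and
`y'` of infinite order, and let `γ ∈ Γ`. Then there are `x, y ∈ Γ` with
`y ≠ 0` such that `2x + ny ≠ γ` for every `n ∈ ℤ`. -/
theorem infinite_order_no_solution (Γ : Type) [AddCommGroup Γ] (x' y' : Γ)
    (hx : ∀ n : ℤ, n ≠ 0 → n • x' ≠ 0) (hy : ∀ n : ℤ, n ≠ 0 → n • y' ≠ 0)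
    (γ : Γ) :
    ∃ x y : Γ, y ≠ 0 ∧ ∀ n : ℤ, (2 : ℤ) • x + n • y ≠ γ := by
  by_cases h : ∃ m : ℤ, m • x' = γ
  · obtain ⟨m, rfl⟩ := h
    -- Work inside `ℤx'`: `2(1 - m) + 3n = m` would give `3 ∣ 3m - 2`.
    refine ⟨(1 - m) • x', (3 : ℤ) • x', hx 3 (by norm_num), fun n hn => ?_⟩
    refine hx (2 * (1 - m) + n * 3 - m) (by omega) ?_
    rw [sub_smul, add_smul, mul_smul, mul_smul, hn, sub_self]
  · refine ⟨0, x', by simpa using hx 1 one_ne_zero, fun n hn => h ⟨n, ?_⟩⟩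
    simpa using hn
end

section
/- For every positive integer k and every finite simple graph G with a vertex set A ⊆ V(G), either G contains k pairwise vertex-disjoint A-paths, or there is a set of at most 2k − 2 vertices that intersects every A-path in G. -/
/-!
The theorem is reduced to Tutte's perfect matching theorem. Double every vertex outside `A` into
two adjacent twins with the same neighbours, and add `d = |A| - 2k` vertices adjacent to everything
(if `|A| < 2k`, all of `A` but one vertex is a hitting set). Call the result `H`; it has an even
number of vertices.

If `H` has a perfect matching, project its edges to `V`. The resulting graph `F ≤ G` has degree at
most 1 on `A` and at most 2 elsewhere, so each component of `F` contains at most two vertices of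
`A`. By parity, a component with exactly one vertex of `A` has a lift matched to a universal
vertex, so at most `d` components are of that kind and at least `k` components contain exactly
two. Each of these carries an `A`-path (`exists_paths`).

Otherwise Tutte's theorem and parity give a set `U` such that `H - U` has at least `|U| + 2` odd
components, and `U` contains all universal vertices. An odd component avoiding `A` contains a
vertex whose twin lies in `U` (`exists_rep`). Deleting the vertices all of whose copies lie in `U`
and all vertices of `A` but one from each odd component meeting `A` destroys all `A`-paths, since a
surviving path would lift to `H - U` and join two representatives of different components. Counting
`U` gives the bound `2k - 2` (`exists_hitting`).
-/

open SimpleGraph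

namespace Gallai

/-! ### The auxiliary graph -/

/-- The vertex set of `G` with every vertex outside `A` doubled: a vertex of `A` has the single
copy `(v, false)`, any other vertex the two copies `(v, false)` and `(v, true)`. -/
abbrev Lift {V : Type} (A : Set V) : Type := {p : V × Bool // p.1 ∈ A → p.2 = false}

/-- The auxiliary graph: two distinct lifts are adjacent iff they are copies of the same vertex or
of adjacent vertices of `G`, and `d` further vertices are adjacent to everything else. -/
def gadget {V : Type} (G : SimpleGraph V) (A : Set V) (d : ℕ) :
    SimpleGraph (Lift A ⊕ Fin d) where
  Adj x y := x ≠ y ∧ ∀ p q : Lift A, x = Sum.inl p → y = Sum.inl q →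
    p.1.1 = q.1.1 ∨ G.Adj p.1.1 q.1.1
  symm := ⟨fun x y h => ⟨h.1.symm, fun p q hp hq => by
    rcases h.2 q p hq hp with h | h
    · exact Or.inl h.symm
    · exact Or.inr h.symm⟩⟩
  loopless := ⟨fun x h => h.1 rfl⟩

section
open Classical
variable {V : Type}

lemma card_fiber [Fintype V] (A : Set V) (v : V) :
    (Finset.univ.filter fun p : Lift A => p.1.1 = v).card = if v ∈ A then 1 else 2 := by
  split_ifs with h
  · rw [Finset.card_eq_one]
    refine ⟨⟨(v, false), fun _ => rfl⟩, ?_⟩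
    ext ⟨⟨w, b⟩, hw⟩
    simp only [Finset.mem_filter, Finset.mem_univ, true_and, Finset.mem_singleton, Subtype.mk.injEq,
      Prod.mk.injEq]
    constructor
    · rintro rfl; exact ⟨rfl, hw h⟩
    · exact fun h => h.1
  · rw [Finset.card_eq_two]
    refine ⟨⟨(v, false), fun _ => rfl⟩, ⟨(v, true), fun h' => absurd h' h⟩, by simp, ?_⟩
    ext ⟨⟨w, b⟩, hw⟩
    cases b <;> simp

/-- The number of lifts of the vertices of `s` is `2 |s| - |s ∩ A|`. -/
lemma card_filter_lift [Fintype V] (A : Set V) (s : Finset V) :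
    (Finset.univ.filter fun p : Lift A => p.1.1 ∈ s).card + (s.filter (· ∈ A)).card
      = 2 * s.card := by
  rw [Finset.card_eq_sum_card_fiberwise (f := fun p : Lift A => p.1.1) (t := s)
    (fun p hp => by simpa using hp), Finset.card_filter, ← Finset.sum_add_distrib, mul_comm,
    ← smul_eq_mul, ← Finset.sum_const]
  refine Finset.sum_congr rfl fun v hv => ?_
  rw [Finset.filter_filter]
  have : (Finset.univ.filter fun p : Lift A => p.1.1 ∈ s ∧ p.1.1 = v)
      = Finset.univ.filter fun p : Lift A => p.1.1 = v := by
    ext p; simp only [Finset.mem_filter, Finset.mem_univ, true_and]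
    exact ⟨fun h => h.2, fun h => ⟨h ▸ hv, h⟩⟩
  rw [this, card_fiber]
  split_ifs <;> rfl

/-! ### From a perfect matching to disjoint paths -/

lemma even_card_of_involution {α : Type*} (s : Finset α) (g : α → α)
    (hm : ∀ a ∈ s, g a ∈ s) (hne : ∀ a ∈ s, g a ≠ a) (hinv : ∀ a ∈ s, g (g a) = a) :
    Even s.card := by
  have h : ∑ _a ∈ s, (1 : ZMod 2) = 0 :=
    Finset.sum_involution (fun a _ => g a) (fun _ _ => by decide) (fun a ha _ => hne a ha)
      hm hinv
  rw [Finset.sum_const, nsmul_one] at h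
  exact (ZMod.natCast_eq_zero_iff_even).1 h

/-- A component with `n` vertices has at least `n - 1` edges, written as a degree sum. -/
lemma card_component_le [Fintype V] (F : SimpleGraph V) (C : F.ConnectedComponent) :
    2 * (Finset.univ.filter fun v => F.connectedComponentMk v = C).card ≤
      (∑ v ∈ Finset.univ.filter (fun v => F.connectedComponentMk v = C), F.degree v) + 2 := by
  have h1 := C.connected_toSimpleGraph.card_vert_le_card_edgeSet_add_one
  have h2 := C.toSimpleGraph.sum_degrees_eq_twice_card_edges
  have h3 : Nat.card C.toSimpleGraph.edgeSet = C.toSimpleGraph.edgeFinset.card := by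
    rw [Nat.card_eq_fintype_card, SimpleGraph.edgeFinset_card]
  have h4 : Nat.card C = (Finset.univ.filter fun v => F.connectedComponentMk v = C).card := by
    rw [Nat.card_eq_fintype_card]
    exact Fintype.card_of_subtype _ (fun x => by simp; rfl)
  have h5 : ∑ v : C, C.toSimpleGraph.degree v ≤
      ∑ v ∈ Finset.univ.filter (fun v => F.connectedComponentMk v = C), F.degree v := by
    rw [Finset.sum_subtype (p := fun v => v ∈ C) _ (fun x => by simp; rfl)]
    refine Finset.sum_le_sum fun v _ => ?_
    rw [← SimpleGraph.card_neighborFinset_eq_degree, ← SimpleGraph.card_neighborFinset_eq_degree]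
    refine Finset.card_le_card_of_injOn (fun x => x.1) (fun x hx => ?_)
      Subtype.val_injective.injOn
    rw [Finset.mem_coe, SimpleGraph.mem_neighborFinset] at hx ⊢
    exact hx
  omega

/-- A perfect matching of the auxiliary graph, given as an involution `m`, yields `k` disjoint
`A`-paths: the components of the projected matching that contain two vertices of `A` contain one
each, and there are at least `k` of them. -/
lemma exists_paths [Fintype V] (G : SimpleGraph V) (A : Set V) (d k : ℕ)
    (hA : (Finset.univ.filter (· ∈ A)).card = 2 * k + d)
    (m : Lift A ⊕ Fin d → Lift A ⊕ Fin d) (hinv : ∀ x, m (m x) = x)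
    (hm : ∀ x, (gadget G A d).Adj x (m x)) :
    ∃ P : Fin k → APath G A, ∀ i j : Fin k, i ≠ j → (P i).VDisjoint (P j) := by
  -- `F` is the projection to `V` of the matching edges that join two different fibres.
  obtain ⟨F, hF⟩ : ∃ F : SimpleGraph V, ∀ u w, F.Adj u w ↔
      u ≠ w ∧ ∃ p q : Lift A, p.1.1 = u ∧ q.1.1 = w ∧ m (.inl p) = .inl q :=
    ⟨{ Adj := fun u w => u ≠ w ∧ ∃ p q : Lift A, p.1.1 = u ∧ q.1.1 = w ∧ m (.inl p) = .inl q
       symm := ⟨by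
        rintro u w ⟨hne, p, q, hp, hq, h⟩
        exact ⟨hne.symm, q, p, hq, hp, by rw [← h, hinv]⟩⟩
       loopless := ⟨fun u h => h.1 rfl⟩ }, fun _ _ => Iff.rfl⟩
  have hFG : F ≤ G := by
    intro u w huw
    obtain ⟨hne, p, q, rfl, rfl, h⟩ := (hF u w).1 huw
    exact ((hm (.inl p)).2 p q rfl h).resolve_left hne
  have hFm : ∀ p q : Lift A, m (.inl p) = .inl q →
      F.connectedComponentMk q.1.1 = F.connectedComponentMk p.1.1 := by
    intro p q h
    by_cases hne : p.1.1 = q.1.1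
    · rw [hne]
    · exact ConnectedComponent.sound
        ((hF _ _).2 ⟨hne, p, q, rfl, rfl, h⟩).reachable.symm
  have hdeg : ∀ v, F.degree v ≤ (Finset.univ.filter fun p : Lift A => p.1.1 = v).card := by
    intro v
    rw [← SimpleGraph.card_neighborFinset_eq_degree]
    refine le_trans (Finset.card_le_card (t := (Finset.univ.filter fun p : Lift A => p.1.1 = v).image
      (fun p => Sum.elim (fun q : Lift A => q.1.1) (fun _ => v) (m (.inl p)))) ?_)
      Finset.card_image_le
    intro w hw
    rw [SimpleGraph.mem_neighborFinset, hF] at hw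
    obtain ⟨_, p, q, hp, hq, h⟩ := hw
    simp only [Finset.mem_image, Finset.mem_filter, Finset.mem_univ, true_and]
    exact ⟨p, hp, by rw [h]; exact hq⟩
  -- `a C` counts the vertices of `A` in `C`, and `e C` the lifts of vertices of `C` that are matched
  -- to one of the `d` universal vertices.
  let a : F.ConnectedComponent → ℕ := fun C =>
    (Finset.univ.filter fun v => v ∈ A ∧ F.connectedComponentMk v = C).card
  let e : F.ConnectedComponent → ℕ := fun C =>
    (Finset.univ.filter fun p : Lift A => F.connectedComponentMk p.1.1 = C ∧
      (m (.inl p)).isRight).card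
  have hsz : ∀ C, (Finset.univ.filter fun p : Lift A => F.connectedComponentMk p.1.1 = C).card + a C
      = 2 * (Finset.univ.filter fun v => F.connectedComponentMk v = C).card := by
    intro C
    have := card_filter_lift A (Finset.univ.filter fun v => F.connectedComponentMk v = C)
    rw [← this, Finset.filter_filter]
    refine congrArg₂ (· + ·) (congrArg Finset.card ?_) (congrArg Finset.card ?_)
    · ext p; simp
    · ext v
      simp only [Finset.mem_filter, Finset.mem_univ, true_and]
      exact and_comm
  -- The degree sum over `C` is at least `2|C| - 2` and at most the number `2|C| - a C` of lifts.
  have ha2 : ∀ C, a C ≤ 2 := by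
    intro C
    have h1 := card_component_le F C
    have h2 : ∑ v ∈ Finset.univ.filter (fun v => F.connectedComponentMk v = C), F.degree v ≤
        (Finset.univ.filter fun p : Lift A => F.connectedComponentMk p.1.1 = C).card := by
      rw [Finset.card_eq_sum_card_fiberwise (f := fun p : Lift A => p.1.1)
        (t := Finset.univ.filter (fun v => F.connectedComponentMk v = C))
        (fun p hp => by simpa using hp)]
      refine Finset.sum_le_sum fun v hv => (hdeg v).trans (Finset.card_le_card fun p hp => ?_)
      simp only [Finset.mem_filter, Finset.mem_univ, true_and] at hp hv ⊢
      exact ⟨by rw [hp, hv], hp⟩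
    have := hsz C
    omega
  -- The lifts over `C` not matched to universal vertices are matched among themselves.
  have hpar : ∀ C, Even (a C + e C) := by
    intro C
    have h1 : Even (Finset.univ.filter fun p : Lift A => F.connectedComponentMk p.1.1 = C ∧
        ¬ (m (.inl p)).isRight).card := by
      have key : ∀ p : Lift A, ¬ (m (.inl p)).isRight → ∃ q, m (.inl p) = .inl q := by
        intro p h
        rcases h' : m (.inl p) with q | q
        · exact ⟨q, rfl⟩
        · simp [h'] at h
      refine even_card_of_involution _ (fun p => Sum.elim id (fun _ => p) (m (.inl p))) ?_ ?_ ?_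
      · intro p hp
        simp only [Finset.mem_filter, Finset.mem_univ, true_and] at hp ⊢
        obtain ⟨q, hq⟩ := key p hp.2
        have h' : m (.inl q) = .inl p := by rw [← hq, hinv]
        simp [hq, h', hFm p q hq, hp.1]
      · intro p hp
        simp only [Finset.mem_filter, Finset.mem_univ, true_and] at hp ⊢
        obtain ⟨q, hq⟩ := key p hp.2
        have := (hm (.inl p)).1
        rw [hq] at this ⊢
        exact fun h => this (congrArg Sum.inl h.symm)
      · intro p hp
        simp only [Finset.mem_filter, Finset.mem_univ, true_and] at hp ⊢
        obtain ⟨q, hq⟩ := key p hp.2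
        have h' : m (.inl q) = .inl p := by rw [← hq, hinv]
        simp [hq, h']
    have h2 := Finset.card_filter_add_card_filter_not
      (s := Finset.univ.filter fun p : Lift A => F.connectedComponentMk p.1.1 = C)
      (fun p => (m (.inl p)).isRight = true)
    rw [Finset.filter_filter, Finset.filter_filter] at h2
    have h3 := hsz C
    simp only [e]
    rw [Nat.even_iff] at *
    omega
  have hsa : ∑ C, a C = 2 * k + d := by
    rw [← hA, Finset.card_eq_sum_card_fiberwise (f := F.connectedComponentMk) (t := Finset.univ)
      (fun _ _ => by simp)]
    simp only [a, Finset.filter_filter]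
  have hse : ∑ C, e C ≤ d := by
    have h1 : ∑ C, e C = (Finset.univ.filter fun p : Lift A => (m (.inl p)).isRight).card := by
      rw [Finset.card_eq_sum_card_fiberwise (f := fun p : Lift A => F.connectedComponentMk p.1.1)
        (t := Finset.univ) (fun _ _ => by simp)]
      refine Finset.sum_congr rfl fun C _ => ?_
      rw [Finset.filter_filter]
      refine congrArg Finset.card ?_
      ext p
      simp only [Finset.mem_filter, Finset.mem_univ, true_and]
      exact and_comm
    rw [h1]
    have : (Finset.univ.image (Sum.inr : Fin d → Lift A ⊕ Fin d)).card ≤ d :=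
      Finset.card_image_le.trans (by simp)
    refine le_trans (Finset.card_le_card_of_injOn (fun p => m (.inl p)) ?_ ?_) this
    · intro p hp
      simp only [Finset.coe_filter, Finset.mem_univ, true_and, Set.mem_ofPred_eq] at hp
      obtain ⟨y, hy⟩ := Sum.isRight_iff.1 hp
      simp [hy]
    · intro p _ q _ h
      have := congrArg m h
      simpa [hinv] using this
  have hgood : k ≤ (Finset.univ.filter fun C => a C = 2).card := by
    have h1 : ∀ C, a C ≤ e C + 2 * (if a C = 2 then 1 else 0) := by
      intro C
      have := ha2 C
      have := Nat.even_iff.1 (hpar C)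
      split_ifs <;> omega
    have h2 := Finset.sum_le_sum fun C (_ : C ∈ Finset.univ) => h1 C
    rw [Finset.sum_add_distrib, ← Finset.mul_sum, ← Finset.card_filter] at h2
    omega
  have hpath : ∀ C, a C = 2 → ∃ P : APath G A, ∀ x ∈ P.walk.support,
      F.connectedComponentMk x = C := by
    intro C hC
    obtain ⟨u, v, huv, hS⟩ := Finset.card_eq_two.1 hC
    have hmem : ∀ x, (x ∈ A ∧ F.connectedComponentMk x = C) ↔ x = u ∨ x = v := by
      intro x
      have := congrArg (x ∈ ·) hS
      simpa using this
    obtain ⟨hu, huC⟩ := (hmem u).2 (Or.inl rfl)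
    obtain ⟨hv, hvC⟩ := (hmem v).2 (Or.inr rfl)
    -- `u` and `v` are the only vertices of `A` in `C`, so any path between them is an `A`-path.
    obtain ⟨p, hp⟩ := (ConnectedComponent.exact (huC.trans hvC.symm)).exists_isPath
    have hsup : ∀ x ∈ (p.mapLe hFG).support, F.connectedComponentMk x = C := by
      intro x hx
      have hx' : x ∈ p.support := by simpa using hx
      rw [← huC]
      exact ConnectedComponent.sound (p.takeUntil x hx').reachable.symm
    exact ⟨⟨u, v, p.mapLe hFG, (Walk.isPath_mapLe hFG).2 hp, huv, hu, hv,
      fun x hx hxA => (hmem x).1 ⟨hxA, hsup x hx⟩⟩, hsup⟩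
  obtain ⟨f, hf⟩ : ∃ f : Fin k → F.ConnectedComponent, Function.Injective f ∧ ∀ i, a (f i) = 2 := by
    obtain ⟨t, ht, htk⟩ := Finset.exists_subset_card_eq hgood
    refine ⟨fun i => (t.equivFinOfCardEq htk).symm i, ?_, fun i => ?_⟩
    · exact Subtype.val_injective.comp (Equiv.injective _)
    · exact (Finset.mem_filter.1 (ht ((t.equivFinOfCardEq htk).symm i).2)).2
  choose P hP using fun i => hpath (f i) (hf.2 i)
  exact ⟨P, fun i j hij x hxi hxj => hij (hf.1 ((hP i x hxi).symm.trans (hP j x hxj)))⟩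

/-! ### From a Tutte violator to a hitting set -/

/-- The other copy of a doubled vertex; vertices of `A` are fixed. -/
noncomputable def twin {A : Set V} (p : Lift A) : Lift A :=
  if h : p.1.1 ∈ A then p else ⟨(p.1.1, !p.1.2), fun h' => absurd h' h⟩

lemma twin_fst {A : Set V} (p : Lift A) : (twin p).1.1 = p.1.1 := by
  unfold twin; split_ifs <;> rfl

lemma twin_twin {A : Set V} (p : Lift A) : twin (twin p) = p := by
  by_cases h : p.1.1 ∈ A
  · simp [twin, h]
  · have h' : (twin p).1.1 ∉ A := by rwa [twin_fst]
    apply Subtype.ext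
    apply Prod.ext
    · rw [twin_fst, twin_fst]
    · simp [twin, h]

lemma twin_ne {A : Set V} (p : Lift A) (h : p.1.1 ∉ A) : twin p ≠ p := by
  intro h'
  have := congrArg (fun q : Lift A => q.1.2) h'
  simp [twin, h] at this

/-- The auxiliary graph with the vertices in `U` deleted, in the form used by Tutte's theorem. -/
abbrev del (G : SimpleGraph V) (A : Set V) (d : ℕ) (U : Set (Lift A ⊕ Fin d)) :=
  ((⊤ : (gadget G A d).Subgraph).deleteVerts U).coe

lemma del_reachable (G : SimpleGraph V) (A : Set V) (d : ℕ) (U : Set (Lift A ⊕ Fin d))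
    (x y : Lift A ⊕ Fin d) (hx hy) (h : x ≠ y → (gadget G A d).Adj x y) :
    (del G A d U).Reachable ⟨x, hx⟩ ⟨y, hy⟩ := by
  by_cases hxy : x = y
  · subst hxy; rfl
  · apply SimpleGraph.Adj.reachable
    rw [Subgraph.coe_adj, Subgraph.deleteVerts_adj]
    simpa using ⟨by simpa using hx, by simpa using hy, h hxy⟩

/-- A walk of `G` each of whose vertices has a copy outside `U` lifts to the auxiliary graph
minus `U`, with prescribed copies of its ends. -/
lemma walk_lift (G : SimpleGraph V) (A : Set V) (d : ℕ) (U : Set (Lift A ⊕ Fin d))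
    {u v : V} (w : G.Walk u v)
    (hw : ∀ x ∈ w.support, ∃ p : Lift A, p.1.1 = x ∧ Sum.inl p ∉ U)
    (p q : Lift A) (hp : p.1.1 = u) (hq : q.1.1 = v) (hpU hqU) :
    (del G A d U).Reachable ⟨Sum.inl p, hpU⟩ ⟨Sum.inl q, hqU⟩ := by
  induction w generalizing p with
  | nil =>
    refine del_reachable G A d U _ _ _ _ fun hne => ⟨hne, ?_⟩
    rintro p' q' hp' hq'
    cases hp'; cases hq'
    exact Or.inl (hp.trans hq.symm)
  | @cons u x v hux w ih =>
    obtain ⟨r, hr, hrU⟩ := hw x (by simp)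
    refine (del_reachable G A d U _ (Sum.inl r) _ (by simpa using hrU) fun hne => ⟨hne, ?_⟩).trans
      (ih (fun y hy => hw y (by simp [hy])) r hr hq _)
    rintro p' q' hp' hq'
    cases hp'; cases hq'
    exact Or.inr (by rw [hp, hr]; exact hux)

/-- When all universal vertices are deleted, an odd component contains a vertex of `A` or a copy
whose twin was deleted: otherwise `twin`
would be a fixed-point-free involution of the component. -/
lemma exists_rep [Fintype V] (G : SimpleGraph V) (A : Set V) (d : ℕ) (U : Set (Lift A ⊕ Fin d))
    (hK : ∀ i, Sum.inr i ∈ U) (c : (del G A d U).ConnectedComponent) (hc : Odd c.supp.ncard) :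
    ∃ (p : Lift A) (hp : _), (del G A d U).connectedComponentMk ⟨Sum.inl p, hp⟩ = c ∧
      (p.1.1 ∉ A → Sum.inl (twin p) ∈ U) := by
  by_contra! hcon
  have hin : ∀ x : ((⊤ : (gadget G A d).Subgraph).deleteVerts U).verts,
      ∃ (p : Lift A), x.1 = Sum.inl p := by
    rintro ⟨x, hx⟩
    rcases x with p | i
    · exact ⟨p, rfl⟩
    · exact absurd (hK i) (by simpa using hx)
  choose π hπ using hin
  have hcon' : ∀ x, (del G A d U).connectedComponentMk x = c →
      (π x).1.1 ∉ A ∧ Sum.inl (twin (π x)) ∉ U := by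
    intro x hx
    refine hcon (π x) (by rw [← hπ]; exact x.2) ?_
    rw [← hx]
    congr 1
    exact Subtype.ext (hπ x).symm
  -- On `c` this is `twin`; its values elsewhere are irrelevant.
  let g : ((⊤ : (gadget G A d).Subgraph).deleteVerts U).verts →
      ((⊤ : (gadget G A d).Subgraph).deleteVerts U).verts := fun x =>
    if h : Sum.inl (twin (π x)) ∈ U then x else ⟨Sum.inl (twin (π x)), by simpa using h⟩
  have hg : ∀ x, (del G A d U).connectedComponentMk x = c → (g x).1 = Sum.inl (twin (π x)) := by
    intro x hx
    simp [g, (hcon' x hx).2]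
  have hgc : ∀ x, (del G A d U).connectedComponentMk x = c →
      (del G A d U).connectedComponentMk (g x) = c := by
    intro x hx
    rw [← hx]
    refine ConnectedComponent.sound (del_reachable G A d U _ _ (g x).2 x.2 fun hne => ⟨hne, ?_⟩)
    intro p q hp hq
    rw [hg x hx] at hp
    rw [hπ] at hq
    cases hp; cases hq
    exact Or.inl (twin_fst _)
  have hπg : ∀ x, (del G A d U).connectedComponentMk x = c → π (g x) = twin (π x) := by
    intro x hx
    have := (hπ (g x)).symm.trans (hg x hx)
    exact Sum.inl_injective this
  have hev : Even (c.supp.toFinset).card := by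
    refine even_card_of_involution _ g ?_ ?_ ?_
    · intro x hx
      simp only [Set.mem_toFinset, ConnectedComponent.mem_supp_iff] at hx ⊢
      exact hgc x hx
    · intro x hx h
      simp only [Set.mem_toFinset, ConnectedComponent.mem_supp_iff] at hx
      have h1 := hπg x hx
      rw [h] at h1
      exact twin_ne _ (hcon' x hx).1 h1.symm
    · intro x hx
      simp only [Set.mem_toFinset, ConnectedComponent.mem_supp_iff] at hx
      apply Subtype.ext
      rw [hg _ (hgc x hx), hπg x hx, twin_twin, hπ x]
  rw [← Set.ncard_eq_toFinset_card'] at hev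
  exact (Nat.not_even_iff_odd.2 hc) hev

/-- A set `U` with at least `|U| + 2` odd components yields a hitting set: the vertices all of whose
copies lie in `U`, together with all vertices of `A` except one from each odd component that
meets `A`. -/
lemma exists_hitting [Fintype V] (G : SimpleGraph V) (A : Set V) (d k : ℕ)
    (hA : (Finset.univ.filter (· ∈ A)).card = 2 * k + d) (U : Set (Lift A ⊕ Fin d))
    (hU : U.ncard + 2 ≤ (del G A d U).oddComponents.ncard) :
    ∃ X : Finset V, X.card ≤ 2 * k - 2 ∧ ∀ P : APath G A, ∃ x ∈ X, x ∈ P.walk.support := by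
  -- A universal vertex outside `U` would leave only one component.
  have hK : ∀ i, Sum.inr i ∈ U := by
    intro i
    by_contra hi
    have h1 : (del G A d U).oddComponents.ncard ≤ 1 := by
      have hall : ∀ c : (del G A d U).ConnectedComponent,
          c = (del G A d U).connectedComponentMk ⟨Sum.inr i, by simpa using hi⟩ := by
        intro c
        induction c using ConnectedComponent.ind with | _ x
        refine ConnectedComponent.sound (del_reachable G A d U _ _ x.2 _ fun hne => ⟨hne, ?_⟩)
        intro p q _ hq
        cases hq
      exact (Set.ncard_le_one).2 fun a _ b _ => (hall a).trans (hall b).symm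
    omega
  have hrep := fun c : (del G A d U).oddComponents => exists_rep G A d U hK c.1 c.2
  choose f hfU hfc hft using hrep
  have hfinj : Function.Injective f := by
    intro c c' h
    apply Subtype.ext
    rw [← hfc c, ← hfc c']
    congr 1
    exact Subtype.ext (congrArg Sum.inl h)
  -- `S`: the representatives in `A`; `Hf`: the copies whose twin alone is deleted; `Y`: the vertices
  -- outside `A` with both copies deleted; `AS`: the rest of `A`.
  let S : Finset V := Finset.univ.filter fun v => v ∈ A ∧ ∃ c, (f c).1.1 = v
  let Hf : Finset (Lift A) := Finset.univ.filter fun p =>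
    p.1.1 ∉ A ∧ Sum.inl p ∉ U ∧ Sum.inl (twin p) ∈ U
  let Y : Finset V := Finset.univ.filter fun v => v ∉ A ∧ ∀ p : Lift A, p.1.1 = v → Sum.inl p ∈ U
  let AS : Finset V := Finset.univ.filter fun v => v ∈ A ∧ v ∉ S
  have hodd : (del G A d U).oddComponents.ncard ≤ S.card + Hf.card := by
    have h1 : (del G A d U).oddComponents.ncard = (Finset.univ.image f).card := by
      rw [Finset.card_image_of_injective _ hfinj, Finset.card_univ, ← Nat.card_eq_fintype_card]
      rfl
    have h2 := card_filter_lift A S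
    have h3 : S.filter (· ∈ A) = S := by
      ext v; simp +contextual [S]
    rw [h3] at h2
    have h4 : (Finset.univ.image f) ⊆ (Finset.univ.filter fun p : Lift A => p.1.1 ∈ S) ∪ Hf := by
      intro p hp
      obtain ⟨c, _, rfl⟩ := Finset.mem_image.1 hp
      rw [Finset.mem_union]
      by_cases hcA : (f c).1.1 ∈ A
      · left
        simp only [S, Finset.mem_filter, Finset.mem_univ, true_and]
        exact ⟨hcA, c, rfl⟩
      · right
        simp only [Hf, Finset.mem_filter, Finset.mem_univ, true_and]
        exact ⟨hcA, by simpa using hfU c, hft c hcA⟩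
    have h5 := (Finset.card_le_card h4).trans (Finset.card_union_le _ _)
    omega
  have hUcard : d + 2 * Y.card + Hf.card ≤ U.ncard := by
    have h2 := card_filter_lift A Y
    have h3 : Y.filter (· ∈ A) = ∅ := by
      ext v; simp +contextual [Y]
    rw [h3, Finset.card_empty, add_zero] at h2
    let L : Finset (Lift A) := (Finset.univ.filter fun p : Lift A => p.1.1 ∈ Y) ∪ Hf.image twin
    have hL : L.card = 2 * Y.card + Hf.card := by
      rw [Finset.card_union_of_disjoint, h2, Finset.card_image_of_injective]
      · exact Function.LeftInverse.injective twin_twin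
      · rw [Finset.disjoint_left]
        intro p hp hp'
        obtain ⟨q, hq, rfl⟩ := Finset.mem_image.1 hp'
        simp only [Hf, Y, Finset.mem_filter, Finset.mem_univ, true_and] at hp hq
        exact hq.2.1 (hp.2 q (twin_fst q).symm)
    have hsub : ∀ x ∈ L.disjSum (Finset.univ : Finset (Fin d)), x ∈ U.toFinset := by
      intro x hx
      rw [Set.mem_toFinset]
      rcases x with p | i
      · rw [Finset.inl_mem_disjSum, Finset.mem_union] at hx
        rcases hx with hx | hx
        · simp only [Y, Finset.mem_filter, Finset.mem_univ, true_and] at hx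
          exact hx.2 p rfl
        · obtain ⟨q, hq, rfl⟩ := Finset.mem_image.1 hx
          simp only [Hf, Finset.mem_filter, Finset.mem_univ, true_and] at hq
          exact hq.2.2
      · exact hK i
    have h6 := Finset.card_le_card hsub
    rw [Finset.card_disjSum, hL, ← Set.ncard_eq_toFinset_card', Finset.card_univ,
      Fintype.card_fin] at h6
    omega
  have hAS : AS.card + S.card = 2 * k + d := by
    rw [← hA, ← Finset.card_filter_add_card_filter_not (s := Finset.univ.filter (· ∈ A)) (· ∈ S),
      add_comm, Finset.filter_filter, Finset.filter_filter]
    refine congrArg₂ (· + ·) (congrArg Finset.card ?_) rfl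
    ext v
    simp +contextual [S]
  refine ⟨Y ∪ AS, ?_, ?_⟩
  · have := Finset.card_union_le Y AS
    omega
  · intro P
    by_contra! hP
    have hS : ∀ v ∈ P.walk.support, v ∈ A → ∃ c, (f c).1.1 = v := by
      intro v hv hvA
      by_contra hvS
      refine hP v ?_ hv
      refine Finset.mem_union_right _ ?_
      simp only [AS, S, Finset.mem_filter, Finset.mem_univ, true_and]
      exact ⟨hvA, fun h => hvS h.2⟩
    obtain ⟨c, hc⟩ := hS P.first (by simp) P.firstMem
    obtain ⟨c', hc'⟩ := hS P.last (by simp) P.lastMem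
    have hw : ∀ x ∈ P.walk.support, ∃ p : Lift A, p.1.1 = x ∧ Sum.inl p ∉ U := by
      intro x hx
      by_cases hxA : x ∈ A
      · obtain ⟨c, hc⟩ := hS x hx hxA
        exact ⟨f c, hc, by simpa using hfU c⟩
      · by_contra! hcon
        refine hP x (Finset.mem_union_left _ ?_) hx
        simp only [Y, Finset.mem_filter, Finset.mem_univ, true_and]
        exact ⟨hxA, hcon⟩
    have hr := ConnectedComponent.sound
      (walk_lift G A d U P.walk hw (f c) (f c') hc hc' (hfU c) (hfU c'))
    rw [hfc, hfc] at hr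
    apply P.ne
    rw [← hc, ← hc', Subtype.ext hr]

end
end Gallai

/-- **Gallai.** For every positive integer `k` and every finite
graph `G` with `A ⊆ V(G)`, either there are `k` pairwise vertex-disjoint
`A`-paths, or a set of at most `2k - 2` vertices meets every `A`-path. -/
theorem gallai_APaths (V : Type) [Fintype V] (G : SimpleGraph V)
    (A : Set V) (k : ℕ) (hk : 0 < k) :
    (∃ P : Fin k → APath G A,
      ∀ i j : Fin k, i ≠ j → (P i).VDisjoint (P j)) ∨
    (∃ X : Finset V, X.card ≤ 2 * k - 2 ∧
      ∀ P : APath G A, ∃ x ∈ X, x ∈ P.walk.support) := by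
  classical
  rcases Nat.lt_or_ge (Finset.univ.filter (· ∈ A)).card (2 * k) with hlt | hge
  · right
    by_cases hne : (Finset.univ.filter (· ∈ A)).Nonempty
    · obtain ⟨a, ha⟩ := hne
      refine ⟨(Finset.univ.filter (· ∈ A)).erase a, ?_, fun P => ?_⟩
      · rw [Finset.card_erase_of_mem ha]
        omega
      · by_cases h : P.first = a
        · exact ⟨P.last, by simpa [← h, P.lastMem] using P.ne.symm, by simp⟩
        · exact ⟨P.first, by simpa [P.firstMem] using h, by simp⟩
    · refine ⟨∅, by simp, fun P => absurd ⟨P.first, ?_⟩ hne⟩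
      simpa using P.firstMem
  -- With `d = |A| - 2k` universal vertices the auxiliary graph has `2|V| - |A| + d` vertices, an
  -- even number.
  obtain ⟨d, hd⟩ := Nat.exists_eq_add_of_le hge
  by_cases hM : ∃ M : (Gallai.gadget G A d).Subgraph, M.IsPerfectMatching
  · left
    obtain ⟨M, hM⟩ := hM
    rw [Subgraph.isPerfectMatching_iff] at hM
    choose m hm huniq using hM
    exact Gallai.exists_paths G A d k hd m (fun x => (huniq (m x) x (hm x).symm).symm)
      fun x => (hm x).adj_sub
  · right
    rw [tutte] at hM
    push Not at hM
    obtain ⟨U, hU⟩ := hM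
    refine Gallai.exists_hitting G A d k hd U ?_
    -- Parity improves Tutte's `|U| + 1` to `|U| + 2`.
    have h1 : U.ncard < (Gallai.del G A d U).oddComponents.ncard := hU
    have h2 := odd_ncard_oddComponents (Gallai.del G A d U)
    have h3 : Nat.card ((⊤ : (Gallai.gadget G A d).Subgraph).deleteVerts U).verts + U.ncard
        = Nat.card (Gallai.Lift A ⊕ Fin d) := by
      rw [← Set.ncard_add_ncard_compl U, add_comm, Nat.card_coe_set_eq]
      congr 2
      ext x; simp
    have h4 := Gallai.card_filter_lift A (Finset.univ : Finset V)
    have h5 : Nat.card (Gallai.Lift A ⊕ Fin d) = Fintype.card (Gallai.Lift A) + d := by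
      simp [Nat.card_eq_fintype_card]
    simp only [Finset.mem_univ, Finset.filter_true, Finset.card_univ] at h4
    rw [Nat.odd_iff, Nat.odd_iff] at h2
    omega
end
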